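/- arXiv:math/0504600 — 2 statements merged into one kernel-verified Lean document; each statement's English description precedes it below -/
import Mathlib

section
/- The images in H^{ell} of the monomials X^i·T^ε·Y^j, for i, j ∈ ℤ and ε ∈ {0, 1} (negative powers being interpreted via X⁻¹ and Y⁻¹), form an R-basis of H^{ell}; i.e. the double affine Hecke algebra of type A₁ admits the triangular decomposition H^{ell} = ℂ[X^{±1}] ⊗ H ⊗ ℂ[Y^{±1}], where H is the finite Hecke algebra spanned over R by 1 and T. -/
/-!
Over an arbitrary commutative ring, with `c` in place of `τ - τ⁻¹`, the relations allow `T` and the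
involution `π = T Y⁻¹ = Y T⁻¹` to be moved past `X^{±1}` (`T X = X⁻¹ T - c X⁻¹`, `π X = q⁻¹ X⁻¹ π`).
Hence the span of the monomials is a left ideal containing `1`, and this is everything.

For independence, let `H^{ell}` act on pairs of Laurent polynomials in `x` over `R[y, y⁻¹]`, the
pairs `(x^i y^j, 0)` and `(0, x^i y^j)` standing for `X^i Y^j` and `X^i T Y^j`. Only the quadratic
relation of `T`, which acts through a Demazure operator, is not immediate: `T² - c T` commutes with
`x`, so it is `R[y^{±1}, x^{±1}]`-linear, and it fixes `(1, 0)` and `(0, 1)`. The monomials map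
`(1, 0)` to independent vectors.
-/

open FreeAlgebra

/-- The coefficient ring `R = ℂ[τ^{±1}, q^{±1}]`, realized as Laurent polynomials in
`q` with coefficients Laurent polynomials in `τ`. -/
abbrev DahaR : Type := LaurentPolynomial (LaurentPolynomial ℂ)

/-- The parameter `τ ∈ R`. -/
noncomputable def dahaTau : DahaR := LaurentPolynomial.C (LaurentPolynomial.T 1)

/-- The parameter `τ⁻¹ ∈ R`. -/
noncomputable def dahaTauInv : DahaR := LaurentPolynomial.C (LaurentPolynomial.T (-1))

/-- The parameter `q ∈ R`. -/
noncomputable def dahaQ : DahaR := LaurentPolynomial.T 1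

/-- The parameter `q⁻¹ ∈ R`. -/
noncomputable def dahaQInv : DahaR := LaurentPolynomial.T (-1)

/-- The defining relations of the double affine Hecke algebra of type `A₁` on the
free `R`-algebra with generators `X = ι 0`, `X⁻¹ = ι 1`, `Y = ι 2`, `Y⁻¹ = ι 3`,
`T = ι 4`. -/
inductive DahaRel : FreeAlgebra DahaR (Fin 5) → FreeAlgebra DahaR (Fin 5) → Prop
  | X_Xinv : DahaRel (ι DahaR (0 : Fin 5) * ι DahaR (1 : Fin 5)) 1
  | Xinv_X : DahaRel (ι DahaR (1 : Fin 5) * ι DahaR (0 : Fin 5)) 1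
  | Y_Yinv : DahaRel (ι DahaR (2 : Fin 5) * ι DahaR (3 : Fin 5)) 1
  | Yinv_Y : DahaRel (ι DahaR (3 : Fin 5) * ι DahaR (2 : Fin 5)) 1
  | hecke : DahaRel
      ((ι DahaR (4 : Fin 5) - algebraMap DahaR (FreeAlgebra DahaR (Fin 5)) dahaTau) *
        (ι DahaR (4 : Fin 5) + algebraMap DahaR (FreeAlgebra DahaR (Fin 5)) dahaTauInv)) 0
  | TXT : DahaRel (ι DahaR (4 : Fin 5) * ι DahaR (0 : Fin 5) * ι DahaR (4 : Fin 5))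
      (ι DahaR (1 : Fin 5))
  | TYinvT : DahaRel (ι DahaR (4 : Fin 5) * ι DahaR (3 : Fin 5) * ι DahaR (4 : Fin 5))
      (ι DahaR (2 : Fin 5))
  | cross : DahaRel
      (ι DahaR (3 : Fin 5) * ι DahaR (1 : Fin 5) * ι DahaR (2 : Fin 5) *
        ι DahaR (0 : Fin 5) * ι DahaR (4 : Fin 5) * ι DahaR (4 : Fin 5))
      (algebraMap DahaR (FreeAlgebra DahaR (Fin 5)) dahaQ)

/-- The double affine Hecke algebra `H^{ell}` of type `A₁`. -/
abbrev Daha := RingQuot DahaRel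

/-- Generators of `H^{ell}`. -/
noncomputable def Daha.X : Daha := RingQuot.mkAlgHom DahaR DahaRel (ι DahaR (0 : Fin 5))
noncomputable def Daha.Xinv : Daha := RingQuot.mkAlgHom DahaR DahaRel (ι DahaR (1 : Fin 5))
noncomputable def Daha.Y : Daha := RingQuot.mkAlgHom DahaR DahaRel (ι DahaR (2 : Fin 5))
noncomputable def Daha.Yinv : Daha := RingQuot.mkAlgHom DahaR DahaRel (ι DahaR (3 : Fin 5))
noncomputable def Daha.T : Daha := RingQuot.mkAlgHom DahaR DahaRel (ι DahaR (4 : Fin 5))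

/-- The power `X^i` for `i ∈ ℤ`, negative powers interpreted via `X⁻¹`. -/
noncomputable def Daha.Xpow (i : ℤ) : Daha :=
  if 0 ≤ i then Daha.X ^ i.toNat else Daha.Xinv ^ (-i).toNat

/-- The power `Y^j` for `j ∈ ℤ`, negative powers interpreted via `Y⁻¹`. -/
noncomputable def Daha.Ypow (j : ℤ) : Daha :=
  if 0 ≤ j then Daha.Y ^ j.toNat else Daha.Yinv ^ (-j).toNat

/-! ### Algebraic preliminaries -/

lemma zpow_apply_of_apply_eq_smul {k M : Type*} [CommRing k] [AddCommGroup M] [Module k M]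
    {u : (Module.End k M)ˣ} {a : kˣ} {v : M} (h : u.1 v = (a : k) • v) (n : ℤ) :
    (↑(u ^ n) : Module.End k M) v = (↑(a ^ n) : k) • v := by
  have h' : (↑u⁻¹ : Module.End k M) v = (↑a⁻¹ : k) • v := by
    have := congrArg (fun w => (↑a⁻¹ : k) • (↑u⁻¹ : Module.End k M) w) h
    simpa [← Module.End.mul_apply, smul_smul] using this.symm
  induction n using Int.induction_on with
  | zero => simp
  | succ n ih =>
    rw [zpow_add_one, Units.val_mul, Module.End.mul_apply, h, map_smul, ih, smul_smul,
      zpow_add_one, Units.val_mul, mul_comm]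
  | pred n ih =>
    rw [zpow_sub_one, Units.val_mul, Module.End.mul_apply, h', map_smul, ih, smul_smul,
      zpow_sub_one, Units.val_mul, mul_comm]

section Stabilizer

variable {R H : Type*} [CommRing R] [Ring H] [Algebra R H]

/-- The subalgebra of elements of `H` whose left multiplication preserves a given submodule. -/
def leftStabilizer (N : Submodule R H) : Subalgebra R H where
  carrier := {a | ∀ b ∈ N, a * b ∈ N}
  mul_mem' ha ha' b hb := by rw [mul_assoc]; exact ha _ (ha' b hb)
  add_mem' ha ha' b hb := by rw [add_mul]; exact add_mem (ha b hb) (ha' b hb)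
  algebraMap_mem' r b hb := by rw [← Algebra.smul_def]; exact N.smul_mem r hb

lemma mem_leftStabilizer_span {s : Set H} {a : H}
    (h : ∀ b ∈ s, a * b ∈ Submodule.span R s) : a ∈ leftStabilizer (Submodule.span R s) :=
  fun _ hb =>
    (Submodule.span_le (p := (Submodule.span R s).comap (LinearMap.mulLeft R a))).2 h hb

lemma eq_top_of_leftStabilizer_eq_top {N : Submodule R H} (hN : leftStabilizer N = ⊤)
    (h1 : 1 ∈ N) : N = ⊤ := by
  refine N.eq_top_iff'.2 fun a => ?_
  have ha : a ∈ leftStabilizer N := hN ▸ Algebra.mem_top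
  simpa only [mul_one] using ha 1 h1

/-- A root of `t ^ 2 = c t + 1` as a unit, with inverse `t - c`. -/
def heckeUnit (c : R) (t : H) (ht : t * t = c • t + 1) : Hˣ where
  val := t
  inv := t - c • 1
  val_inv := by rw [mul_sub, ht, mul_smul_comm, mul_one, add_sub_cancel_left]
  inv_val := by rw [sub_mul, ht, smul_mul_assoc, one_mul, add_sub_cancel_left]

lemma mul_self_eq_of_hecke {a b : R} (hab : a * b = 1) {t : H} :
    (t - algebraMap R H a) * (t + algebraMap R H b) = 0 ↔ t * t = (a - b) • t + 1 := by
  have h : (t - algebraMap R H a) * (t + algebraMap R H b) = t * t - ((a - b) • t + 1) := by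
    rw [sub_mul, mul_add, mul_add, ← map_mul, hab, map_one, ← Algebra.commutes b t,
      ← Algebra.smul_def, ← Algebra.smul_def, sub_smul]
    abel
  rw [h, sub_eq_zero]

end Stabilizer

/-! ### Generators and relations -/

/-- A triple of units `X`, `Y`, `T` of an `R`-algebra satisfying the relations of the double affine
Hecke algebra of type `A₁` with arbitrary parameters `c` (which is `τ - τ⁻¹` in `H^{ell}`) and `q`.
The quadratic relation is encoded as `T⁻¹ = T - c`. -/
@[ext]
structure DahaTriple {R : Type*} [CommRing R] (c : R) (q : Rˣ) (H : Type*) [Ring H]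
    [Algebra R H] where
  X : Hˣ
  Y : Hˣ
  T : Hˣ
  val_inv_T : (↑T⁻¹ : H) = T - c • 1
  T_mul_X_mul_T : T * X * T = X⁻¹
  T_mul_inv_Y_mul_T : T * Y⁻¹ * T = Y
  cross : Y⁻¹ * X⁻¹ * Y * X * T * T = Units.map (algebraMap R H : R →* H) q

namespace DahaTriple

section Basic

variable {R H A : Type*} [CommRing R] [Ring H] [Algebra R H] [Ring A] [Algebra R A]
  {c : R} {q : Rˣ}

/-- The PBW monomial `X ^ i * T ^ ε * Y ^ j` with index `(i, ε, j)`. -/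
def monomial (d : DahaTriple c q H) (p : ℤ × Bool × ℤ) : H :=
  ↑(d.X ^ p.1 * (if p.2.1 then d.T else 1) * d.Y ^ p.2.2)

/-- The image of a triple under an algebra homomorphism. -/
def map (φ : H →ₐ[R] A) (d : DahaTriple c q H) : DahaTriple c q A where
  X := Units.map (φ : H →* A) d.X
  Y := Units.map (φ : H →* A) d.Y
  T := Units.map (φ : H →* A) d.T
  val_inv_T := by simpa using congrArg φ d.val_inv_T
  T_mul_X_mul_T := by simpa using congrArg (Units.map (φ : H →* A)) d.T_mul_X_mul_T
  T_mul_inv_Y_mul_T := by simpa using congrArg (Units.map (φ : H →* A)) d.T_mul_inv_Y_mul_T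
  cross := by
    have h := congrArg (Units.map (φ : H →* A)) d.cross
    simp only [map_mul, map_inv] at h
    rw [h]
    ext
    simp

lemma monomial_map (φ : H →ₐ[R] A) (d : DahaTriple c q H) :
    (d.map φ).monomial = φ ∘ d.monomial := by
  ext p
  simp only [monomial, map, Function.comp_apply]
  rw [← MonoidHom.coe_coe φ, ← Units.coe_map, map_mul, map_mul, map_zpow, map_zpow,
    apply_ite (Units.map _), map_one]

/-- The triple `(X, π T, T)` attached to the presentation by `X`, `T` and an involution `π`. -/
def ofInvolution (X T π : Hˣ) (hT : (↑T⁻¹ : H) = T - c • 1) (hTX : T * X * T = X⁻¹)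
    (hπ : π * π = 1) (hπX : π * X⁻¹ = Units.map (algebraMap R H : R →* H) q * X * π) :
    DahaTriple c q H where
  X := X
  Y := π * T
  T := T
  val_inv_T := hT
  T_mul_X_mul_T := hTX
  T_mul_inv_Y_mul_T := by rw [mul_inv_rev, mul_inv_cancel_left, inv_eq_of_mul_eq_one_left hπ]
  cross := by
    have hq : Commute (Units.map (algebraMap R H : R →* H) q) T :=
      Units.ext (Algebra.commutes (q : R) (T : H))
    calc (π * T)⁻¹ * X⁻¹ * (π * T) * X * T * T
        = T⁻¹ * (π⁻¹ * X⁻¹) * π * (T * X * T) * T := by group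
      _ = T⁻¹ * Units.map (algebraMap R H : R →* H) q * X * (π * π) * X⁻¹ * T := by
        rw [hTX, inv_eq_of_mul_eq_one_left hπ, hπX]
        group
      _ = Units.map (algebraMap R H : R →* H) q := by
        rw [hπ, mul_one, mul_inv_cancel_right, mul_assoc, hq.eq, inv_mul_cancel_left]

/-- A triple over an `R`-algebra `k`, viewed over `R`. -/
def restrictScalars {k : Type*} [CommRing k] [Algebra R k] [Algebra k H] [IsScalarTower R k H]
    (d : DahaTriple (algebraMap R k c) (Units.map (algebraMap R k : R →* k) q) H) :
    DahaTriple c q H where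
  __ := d
  val_inv_T := by rw [d.val_inv_T, algebraMap_smul]
  cross := by
    rw [d.cross]
    ext
    exact (IsScalarTower.algebraMap_apply R k H q).symm

/-- The universal property of the double affine Hecke algebra: `X^{±1}`, `Y^{±1}`, `T` generate `H`
and every triple arises from this one. Target algebras range over the universe of `R`. -/
structure IsUniversal.{u, v} {R : Type u} [CommRing R] {H : Type v} [Ring H] [Algebra R H] {c : R}
    {q : Rˣ} (d : DahaTriple c q H) : Prop where
  adjoin_eq_top : Algebra.adjoin R ({↑d.X, ↑d.X⁻¹, ↑d.Y, ↑d.Y⁻¹, ↑d.T} : Set H) = ⊤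
  exists_map_eq : ∀ {A : Type u} [Ring A] [Algebra R A] (e : DahaTriple c q A),
    ∃ φ : H →ₐ[R] A, d.map φ = e

end Basic

section Relations

variable {R H : Type*} [CommRing R] [Ring H] [Algebra R H] {c : R} {q : Rˣ}
  (d : DahaTriple c q H)

lemma T_mul_T : (d.T * d.T : H) = c • (d.T : H) + 1 := by
  have h : (d.T : H) * (d.T - c • 1) = 1 := by rw [← d.val_inv_T, Units.mul_inv]
  rwa [mul_sub, mul_smul_comm, mul_one, sub_eq_iff_eq_add'] at h

lemma T_mul_X : (d.T * d.X : H) = ↑d.X⁻¹ * d.T - c • (↑d.X⁻¹ : H) := by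
  have h : d.T * d.X = d.X⁻¹ * d.T⁻¹ := eq_mul_inv_of_mul_eq d.T_mul_X_mul_T
  rw [← Units.val_mul, h, Units.val_mul, d.val_inv_T, mul_sub, mul_smul_comm, mul_one]

lemma inv_T_mul_inv_X : d.T⁻¹ * d.X⁻¹ = d.X * d.T := by
  rw [← d.T_mul_X_mul_T, mul_assoc d.T, inv_mul_cancel_left]

lemma T_mul_inv_X : (d.T * ↑d.X⁻¹ : H) = d.X * d.T + c • (↑d.X⁻¹ : H) := by
  rw [← Units.val_mul d.X, ← d.inv_T_mul_inv_X, Units.val_mul, d.val_inv_T, sub_mul,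
    smul_mul_assoc, one_mul, sub_add_cancel]

/-- The involution `π = T * Y⁻¹ = Y * T⁻¹`. -/
def pi : Hˣ := d.T * d.Y⁻¹

lemma pi_mul_T : d.pi * d.T = d.Y := d.T_mul_inv_Y_mul_T

lemma inv_T_mul_pi : d.T⁻¹ * d.pi = d.Y⁻¹ := inv_mul_cancel_left _ _

lemma pi_mul_inv_X : (d.pi * ↑d.X⁻¹ : H) = (q : R) • (d.X * d.pi : H) := by
  have hY : d.pi = d.Y * d.T⁻¹ := eq_mul_inv_of_mul_eq d.pi_mul_T
  have h : d.pi * d.X⁻¹ = d.X * d.Y * (d.Y⁻¹ * d.X⁻¹ * d.Y * d.X * d.T * d.T) * d.T⁻¹ := by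
    rw [hY, mul_assoc d.Y, d.inv_T_mul_inv_X]
    group
  rw [← Units.val_mul, h, d.cross, hY]
  simp [Algebra.smul_def, mul_assoc, Algebra.left_comm]

lemma pi_mul_X : (d.pi * d.X : H) = (↑q⁻¹ : R) • (↑d.X⁻¹ * d.pi : H) := by
  have h : (↑d.X⁻¹ * (d.pi * ↑d.X⁻¹) * d.X : H) = (q : R) • (d.pi * d.X : H) := by
    rw [d.pi_mul_inv_X, mul_smul_comm, Units.inv_mul_cancel_left, smul_mul_assoc]
  rw [mul_assoc, Units.inv_mul_cancel_right] at h
  rw [h, smul_smul, Units.inv_mul, one_smul]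

end Relations

/-! ### The monomials span -/

section Spanning

variable {R H : Type*} [CommRing R] [Ring H] [Algebra R H] {c : R} {q : Rˣ}
  (d : DahaTriple c q H)

/-- The `R`-span of the PBW monomials. -/
def monomialSpan : Submodule R H := Submodule.span R (Set.range d.monomial)

lemma monomial_mem_monomialSpan (p : ℤ × Bool × ℤ) : d.monomial p ∈ d.monomialSpan :=
  Submodule.subset_span ⟨p, rfl⟩

lemma X_zpow_mul_monomial (n : ℤ) (p : ℤ × Bool × ℤ) :
    ↑(d.X ^ n) * d.monomial p = d.monomial (n + p.1, p.2) := by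
  simp only [monomial, zpow_add, Units.val_mul, mul_assoc]

lemma X_zpow_mem_leftStabilizer (n : ℤ) : ↑(d.X ^ n) ∈ leftStabilizer d.monomialSpan := by
  refine mem_leftStabilizer_span ?_
  rintro _ ⟨p, rfl⟩
  rw [X_zpow_mul_monomial]
  exact d.monomial_mem_monomialSpan _

lemma X_mem_leftStabilizer : ↑d.X ∈ leftStabilizer d.monomialSpan := by
  simpa only [zpow_one] using d.X_zpow_mem_leftStabilizer 1

lemma inv_X_mem_leftStabilizer : ↑d.X⁻¹ ∈ leftStabilizer d.monomialSpan := by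
  simpa only [zpow_neg_one] using d.X_zpow_mem_leftStabilizer (-1)

lemma mem_leftStabilizer_of_commutation {a b b' r r' : H}
    (h0 : ∀ e j, a * d.monomial (0, e, j) ∈ d.monomialSpan)
    (hX : a * d.X = b * a + r) (hX' : a * ↑d.X⁻¹ = b' * a + r')
    (hb : b ∈ leftStabilizer d.monomialSpan) (hr : r ∈ leftStabilizer d.monomialSpan)
    (hb' : b' ∈ leftStabilizer d.monomialSpan) (hr' : r' ∈ leftStabilizer d.monomialSpan) :
    a ∈ leftStabilizer d.monomialSpan := by
  refine mem_leftStabilizer_span ?_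
  rintro _ ⟨⟨i, e, j⟩, rfl⟩
  induction i using Int.induction_on with
  | zero => exact h0 e j
  | succ i ih =>
    have h := d.X_zpow_mul_monomial 1 (i, e, j)
    rw [zpow_one] at h
    rw [add_comm, ← h, ← mul_assoc, hX, add_mul, mul_assoc]
    exact add_mem (hb _ ih) (hr _ (d.monomial_mem_monomialSpan _))
  | pred i ih =>
    have h := d.X_zpow_mul_monomial (-1) (-i, e, j)
    rw [zpow_neg_one] at h
    rw [sub_eq_neg_add, ← h, ← mul_assoc, hX', add_mul, mul_assoc]
    exact add_mem (hb' _ ih) (hr' _ (d.monomial_mem_monomialSpan _))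

lemma T_mul_monomial_false (j : ℤ) :
    d.T * d.monomial (0, false, j) = d.monomial (0, true, j) := by
  simp [monomial]

lemma T_mul_monomial_true (j : ℤ) :
    d.T * d.monomial (0, true, j) =
      c • d.monomial (0, true, j) + d.monomial (0, false, j) := by
  simp [monomial, ← mul_assoc, d.T_mul_T, add_mul]

lemma pi_mul_monomial_false (j : ℤ) :
    d.pi * d.monomial (0, false, j) = d.monomial (0, true, -1 + j) := by
  simp [monomial, pi, zpow_add, mul_assoc]

lemma pi_mul_monomial_true (j : ℤ) :
    d.pi * d.monomial (0, true, j) = d.monomial (0, false, 1 + j) := by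
  simp only [monomial, ← Units.val_mul, if_true, zpow_zero, one_mul, ← mul_assoc,
    d.pi_mul_T, zpow_one_add]
  simp

lemma T_mem_leftStabilizer : ↑d.T ∈ leftStabilizer d.monomialSpan := by
  refine d.mem_leftStabilizer_of_commutation (fun e j => ?_)
    (d.T_mul_X.trans (sub_eq_add_neg _ _)) d.T_mul_inv_X
    d.inv_X_mem_leftStabilizer (neg_mem (Subalgebra.smul_mem _ d.inv_X_mem_leftStabilizer c))
    d.X_mem_leftStabilizer (Subalgebra.smul_mem _ d.inv_X_mem_leftStabilizer c)
  cases e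
  · rw [T_mul_monomial_false]
    exact d.monomial_mem_monomialSpan _
  · rw [T_mul_monomial_true]
    exact add_mem (Submodule.smul_mem _ _ (d.monomial_mem_monomialSpan _))
      (d.monomial_mem_monomialSpan _)

lemma pi_mem_leftStabilizer : ↑d.pi ∈ leftStabilizer d.monomialSpan := by
  refine d.mem_leftStabilizer_of_commutation (b := (↑q⁻¹ : R) • ↑d.X⁻¹) (b' := (q : R) • ↑d.X)
    (fun e j => ?_) (by rw [d.pi_mul_X, smul_mul_assoc, add_zero])
    (by rw [d.pi_mul_inv_X, smul_mul_assoc, add_zero])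
    (Subalgebra.smul_mem _ d.inv_X_mem_leftStabilizer _) (zero_mem _)
    (Subalgebra.smul_mem _ d.X_mem_leftStabilizer _) (zero_mem _)
  cases e
  · rw [pi_mul_monomial_false]
    exact d.monomial_mem_monomialSpan _
  · rw [pi_mul_monomial_true]
    exact d.monomial_mem_monomialSpan _

lemma Y_mem_leftStabilizer : ↑d.Y ∈ leftStabilizer d.monomialSpan := by
  rw [← d.pi_mul_T, Units.val_mul]
  exact mul_mem d.pi_mem_leftStabilizer d.T_mem_leftStabilizer

lemma inv_Y_mem_leftStabilizer : ↑d.Y⁻¹ ∈ leftStabilizer d.monomialSpan := by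
  rw [← d.inv_T_mul_pi, Units.val_mul, d.val_inv_T]
  exact mul_mem (sub_mem d.T_mem_leftStabilizer (Subalgebra.smul_mem _ (one_mem _) c))
    d.pi_mem_leftStabilizer

lemma one_mem_monomialSpan : 1 ∈ d.monomialSpan := by
  simpa [monomial] using d.monomial_mem_monomialSpan (0, false, 0)

theorem monomialSpan_eq_top
    (hd : Algebra.adjoin R ({↑d.X, ↑d.X⁻¹, ↑d.Y, ↑d.Y⁻¹, ↑d.T} : Set H) = ⊤) :
    d.monomialSpan = ⊤ := by
  refine eq_top_of_leftStabilizer_eq_top (top_le_iff.1 (hd ▸ Algebra.adjoin_le ?_))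
    d.one_mem_monomialSpan
  rintro _ (rfl | rfl | rfl | rfl | rfl)
  exacts [d.X_mem_leftStabilizer, d.inv_X_mem_leftStabilizer, d.Y_mem_leftStabilizer,
    d.inv_Y_mem_leftStabilizer, d.T_mem_leftStabilizer]

end Spanning

end DahaTriple

/-! ### Laurent polynomials -/

section Laurent

open LaurentPolynomial (T invert)
open scoped LaurentPolynomial

variable {k : Type*} [CommRing k]

/-- The unit `x` of `k[x, x⁻¹]`. -/
noncomputable def laurentX (k : Type*) [CommRing k] : k[T;T⁻¹]ˣ where
  val := T 1
  inv := T (-1)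
  val_inv := by rw [← LaurentPolynomial.T_add, add_neg_cancel, LaurentPolynomial.T_zero]
  inv_val := by rw [← LaurentPolynomial.T_add, neg_add_cancel, LaurentPolynomial.T_zero]

lemma val_laurentX_zpow (n : ℤ) : (↑(laurentX k ^ n) : k[T;T⁻¹]) = T n := by
  induction n using Int.induction_on with
  | zero => rw [zpow_zero, Units.val_one, LaurentPolynomial.T_zero]
  | succ n ih => rw [zpow_add_one, Units.val_mul, ih, LaurentPolynomial.T_add]; rfl
  | pred n ih => rw [zpow_sub_one, Units.val_mul, ih, LaurentPolynomial.T_sub]; rfl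

/-- Evaluation of Laurent polynomials at a unit of a not necessarily commutative algebra. -/
noncomputable def laurentEval {A : Type*} [Ring A] [Algebra k A] (u : Aˣ) : k[T;T⁻¹] →ₐ[k] A :=
  AddMonoidAlgebra.lift k A ℤ ((Units.coeHom A).comp (zpowersHom Aˣ u))

lemma laurentEval_T {A : Type*} [Ring A] [Algebra k A] (u : Aˣ) (n : ℤ) :
    laurentEval (k := k) u (T n) = ↑(u ^ n) := by
  rw [laurentEval, T, AddMonoidAlgebra.lift_single, one_smul]
  rfl

lemma linearIndependent_laurentT : LinearIndependent k (T : ℤ → k[T;T⁻¹]) := by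
  convert (AddMonoidAlgebra.basis ℤ k).linearIndependent using 1
  ext n : 1
  exact (AddMonoidAlgebra.basis_apply ..).symm

lemma laurent_induction {P : k[T;T⁻¹] → Prop} (one : P 1) (add : ∀ f g, P f → P g → P (f + g))
    (smul : ∀ (a : k) f, P f → P (a • f)) (T_one_mul : ∀ f, P f → P (T 1 * f))
    (T_neg_one_mul : ∀ f, P f → P (T (-1) * f)) (f : k[T;T⁻¹]) : P f := by
  have hT (n : ℤ) : P (T n) := by
    induction n using Int.induction_on with
    | zero => exact one
    | succ n ih => rw [add_comm, LaurentPolynomial.T_add]; exact T_one_mul _ ih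
    | pred n ih => rw [sub_eq_neg_add, LaurentPolynomial.T_add]; exact T_neg_one_mul _ ih
  induction f using LaurentPolynomial.induction_on' with
  | add p q hp hq => exact add _ _ hp hq
  | C_mul_T n a => rw [← LaurentPolynomial.smul_eq_C_mul]; exact smul _ _ (hT n)

/-- Commuting with `x` is enough for being `k[x, x⁻¹]`-linear. -/
lemma map_laurent_smul {M N : Type*} [AddCommGroup M] [AddCommGroup N] [Module k M] [Module k N]
    [Module k[T;T⁻¹] M] [Module k[T;T⁻¹] N] [IsScalarTower k k[T;T⁻¹] M]
    [IsScalarTower k k[T;T⁻¹] N] {φ : M →ₗ[k] N}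
    (hφ : ∀ v, φ ((T 1 : k[T;T⁻¹]) • v) = (T 1 : k[T;T⁻¹]) • φ v) (f : k[T;T⁻¹]) (v : M) :
    φ (f • v) = f • φ v := by
  induction f using laurent_induction generalizing v with
  | one => rw [one_smul, one_smul]
  | add f g hf hg => rw [add_smul, map_add, hf, hg, add_smul]
  | smul a f hf => rw [smul_assoc, map_smul, hf, smul_assoc]
  | T_one_mul f hf => rw [mul_smul, hφ, hf, mul_smul]
  | T_neg_one_mul f hf =>
    have h := hφ ((T (-1) * f) • v)
    rw [← mul_smul, ← mul_assoc, ← LaurentPolynomial.T_add, add_neg_cancel,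
      LaurentPolynomial.T_zero, one_mul, hf] at h
    rw [mul_smul _ _ (φ v), h, ← mul_smul, ← LaurentPolynomial.T_add, neg_add_cancel,
      LaurentPolynomial.T_zero, one_smul]

/-! ### The Demazure operator -/

/-- The matrix `!![x⁻¹, -c x⁻¹; 0, x]`, the value of `demazureHom c` at `x`. -/
noncomputable def demazureUnit (c : k) : (Matrix (Fin 2) (Fin 2) k[T;T⁻¹])ˣ where
  val := !![T (-1), -c • T (-1); 0, T 1]
  inv := !![T 1, c • T (-1); 0, T (-1)]
  val_inv := by
    simp [Matrix.one_fin_two, -LaurentPolynomial.T_mul, ← LaurentPolynomial.T_add]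
  inv_val := by
    simp [Matrix.one_fin_two, -LaurentPolynomial.T_mul, ← LaurentPolynomial.T_add]

/-- The algebra homomorphism `f ↦ !![s f, D f; 0, f]`, where `s` is the reflection `x ↦ x⁻¹` and
`D` is the Demazure operator. Multiplicativity encodes the twisted Leibniz rule of `D`, so that
`D` can be defined without division. -/
noncomputable def demazureHom (c : k) : k[T;T⁻¹] →ₐ[k] Matrix (Fin 2) (Fin 2) k[T;T⁻¹] :=
  laurentEval (demazureUnit c)

lemma demazureHom_T_one (c : k) :
    demazureHom c (T 1) = !![T (-1), -c • T (-1); 0, T 1] := by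
  rw [demazureHom, laurentEval_T, zpow_one]; rfl

lemma demazureHom_T_neg_one (c : k) :
    demazureHom c (T (-1)) = !![T 1, c • T (-1); 0, T (-1)] := by
  rw [demazureHom, laurentEval_T, zpow_neg_one]; rfl

/-- The Demazure operator `D f = c (s f - f) / (x² - 1)`, where `s` is the reflection
`x ↦ x⁻¹`. -/
noncomputable def demazure (c : k) : k[T;T⁻¹] →ₗ[k] k[T;T⁻¹] :=
  Matrix.entryLinearMap k _ 0 1 ∘ₗ (demazureHom c).toLinearMap

lemma demazureHom_apply (c : k) (f : k[T;T⁻¹]) :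
    demazureHom c f = !![invert f, demazure c f; 0, f] := by
  suffices h : demazureHom c f 0 0 = invert f ∧ demazureHom c f 1 0 = 0 ∧
      demazureHom c f 1 1 = f by
    rw [Matrix.eta_fin_two (demazureHom c f), h.1, h.2.1, h.2.2]; rfl
  induction f using laurent_induction with
  | one => simp
  | add f g hf hg => simp [hf, hg]
  | smul a f hf => simp [hf]
  | T_one_mul f hf => simp [demazureHom_T_one, Matrix.mul_apply, hf]
  | T_neg_one_mul f hf => simp [demazureHom_T_neg_one, Matrix.mul_apply, hf]

lemma demazure_mul (c : k) (f g : k[T;T⁻¹]) :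
    demazure c (f * g) = invert f * demazure c g + demazure c f * g := by
  have h := map_mul (demazureHom c) f g
  simp only [demazureHom_apply, Matrix.mul_fin_two] at h
  exact congrFun (congrFun h 0) 1

lemma demazure_one (c : k) : demazure c 1 = 0 := by simp [demazure]

lemma demazure_T_one (c : k) : demazure c (T 1) = -c • T (-1) := by
  simp [demazure, demazureHom_T_one]

lemma demazure_T_neg_one (c : k) : demazure c (T (-1)) = c • T (-1) := by
  simp [demazure, demazureHom_T_neg_one]

/-! ### The induced representation -/

/-- The affine reflection `σ : x ↦ q⁻¹ x⁻¹`. -/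
noncomputable def affineReflection (q : kˣ) : k[T;T⁻¹] →ₐ[k] k[T;T⁻¹] :=
  laurentEval (Units.map (algebraMap k k[T;T⁻¹] : k →* k[T;T⁻¹]) q⁻¹ * (laurentX k)⁻¹)

lemma affineReflection_T_one (q : kˣ) :
    affineReflection q (T 1) = (↑q⁻¹ : k) • T (-1) := by
  rw [affineReflection, laurentEval_T, zpow_one, Algebra.smul_def]; rfl

lemma affineReflection_T_neg_one (q : kˣ) :
    affineReflection q (T (-1)) = (q : k) • T 1 := by
  rw [affineReflection, laurentEval_T, zpow_neg_one, mul_inv, inv_inv, map_inv, inv_inv,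
    Algebra.smul_def]
  rfl

lemma affineReflection_affineReflection (q : kˣ) (f : k[T;T⁻¹]) :
    affineReflection q (affineReflection q f) = f := by
  induction f using laurent_induction with
  | one => simp
  | add f g hf hg => simp [hf, hg]
  | smul a f hf => simp [hf]
  | T_one_mul f hf =>
    rw [map_mul, map_mul, hf, affineReflection_T_one, map_smul, affineReflection_T_neg_one,
      smul_smul, Units.inv_mul, one_smul]
  | T_neg_one_mul f hf =>
    rw [map_mul, map_mul, hf, affineReflection_T_neg_one, map_smul, affineReflection_T_one,
      smul_smul, Units.mul_inv, one_smul]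

/-- The space of the representation: over `k = R[y, y⁻¹]`, the pairs `(x^i y^j, 0)` and
`(0, x^i y^j)` stand for `X^i Y^j` and `X^i T Y^j`. -/
abbrev LaurentPair (k : Type*) [CommRing k] := k[T;T⁻¹] × k[T;T⁻¹]

/-- The action of `X`. -/
noncomputable def laurentRepX (k : Type*) [CommRing k] : (Module.End k (LaurentPair k))ˣ :=
  Units.map (Algebra.lsmul k k (LaurentPair k) :
    k[T;T⁻¹] →ₐ[k] Module.End k (LaurentPair k)).toMonoidHom (laurentX k)

/-- The action of `T`. -/
noncomputable def laurentRepT (c : k) : Module.End k (LaurentPair k) :=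
  LinearMap.prodMap (demazure c) (demazure c) +
    LinearMap.prod (invert.toLinearMap ∘ₗ LinearMap.snd k _ _)
      (invert.toLinearMap ∘ₗ (LinearMap.fst k _ _ + c • LinearMap.snd k _ _))

/-- The action of `π = Y T⁻¹`; the unit `y` is the action of `Y` on the vector `(1, 0)`. -/
noncomputable def laurentRepPi (q y : kˣ) : Module.End k (LaurentPair k) :=
  LinearMap.prod ((y : k) • (affineReflection q).toLinearMap ∘ₗ LinearMap.snd k _ _)
    ((↑y⁻¹ : k) • (affineReflection q).toLinearMap ∘ₗ LinearMap.fst k _ _)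

lemma laurentRepX_zpow_apply (n : ℤ) (v : LaurentPair k) :
    (↑(laurentRepX k ^ n) : Module.End k (LaurentPair k)) v = (T n : k[T;T⁻¹]) • v := by
  rw [laurentRepX, ← map_zpow, ← val_laurentX_zpow]; rfl

lemma laurentRepT_apply (c : k) (v : LaurentPair k) :
    laurentRepT c v = (demazure c v.1 + invert v.2,
      demazure c v.2 + (invert v.1 + c • invert v.2)) := by
  ext1 <;> simp [laurentRepT]

lemma laurentRepPi_apply (q y : kˣ) (v : LaurentPair k) :
    laurentRepPi q y v = ((y : k) • affineReflection q v.2, (↑y⁻¹ : k) • affineReflection q v.1) :=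
  rfl

lemma laurentRepT_smul (c : k) (f : k[T;T⁻¹]) (v : LaurentPair k) :
    laurentRepT c (f • v) = invert f • laurentRepT c v + demazure c f • v := by
  ext1 <;> simp only [laurentRepT_apply, Prod.smul_fst, Prod.smul_snd, Prod.fst_add,
    Prod.snd_add, smul_eq_mul, demazure_mul, map_mul, LaurentPolynomial.smul_eq_C_mul] <;> ring

lemma laurentRepPi_smul (q y : kˣ) (f : k[T;T⁻¹]) (v : LaurentPair k) :
    laurentRepPi q y (f • v) = affineReflection q f • laurentRepPi q y v := by
  simp [laurentRepPi_apply]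

lemma laurentRepPi_mul_self (q y : kˣ) : laurentRepPi q y * laurentRepPi q y = 1 := by
  refine LinearMap.ext fun v => ?_
  simp [laurentRepPi_apply, affineReflection_affineReflection, smul_smul]

lemma laurentRepT_mul_self (c : k) : laurentRepT c * laurentRepT c = c • laurentRepT c + 1 := by
  rw [← sub_eq_iff_eq_add']
  have hlin := map_laurent_smul (φ := laurentRepT c * laurentRepT c - c • laurentRepT c)
    fun v => by
      simp only [LinearMap.sub_apply, Module.End.mul_apply, LinearMap.smul_apply,
        laurentRepT_smul, map_add, LaurentPolynomial.invert_T, neg_neg, demazure_T_one,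
        demazure_T_neg_one, smul_assoc, map_smul]
      module
  refine LinearMap.ext fun v => ?_
  calc (laurentRepT c * laurentRepT c - c • laurentRepT c) v
      = (laurentRepT c * laurentRepT c - c • laurentRepT c) (v.1 • (1, 0) + v.2 • (0, 1)) := by
        simp
    _ = v.1 • (1, 0) + v.2 • (0, 1) := by
        rw [map_add, hlin, hlin]
        congr 2 <;> simp [laurentRepT_apply, demazure_one]
    _ = v := by simp

lemma laurentRepT_smul_laurentRepT (c : k) (v : LaurentPair k) :
    laurentRepT c ((T 1 : k[T;T⁻¹]) • laurentRepT c v) = (T (-1) : k[T;T⁻¹]) • v := by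
  have h : laurentRepT c (laurentRepT c v) = c • laurentRepT c v + v :=
    LinearMap.congr_fun (laurentRepT_mul_self c) v
  rw [laurentRepT_smul, LaurentPolynomial.invert_T, demazure_T_one, h, smul_assoc]
  module

lemma linearIndependent_inl_inr :
    LinearIndependent k[T;T⁻¹] fun e : Bool => if e then ((0, 1) : LaurentPair k) else (1, 0) := by
  refine Fintype.linearIndependent_iff.2 fun g hg => ?_
  simpa [and_comm] using hg

lemma laurentRepPi_T_neg_one_smul (q y : kˣ) (v : LaurentPair k) :
    laurentRepPi q y ((T (-1) : k[T;T⁻¹]) • v) =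
      (q : k) • (T 1 : k[T;T⁻¹]) • laurentRepPi q y v := by
  rw [laurentRepPi_smul, affineReflection_T_neg_one, smul_assoc]

/-- The representation of the double affine Hecke algebra with parameters `c`, `q` induced from the
character `Y ↦ y` of the subalgebra `k[Y, Y⁻¹]`. -/
noncomputable def inducedRep (c : k) (q y : kˣ) :
    DahaTriple c q (Module.End k (LaurentPair k)) :=
  .ofInvolution (laurentRepX k) (heckeUnit c (laurentRepT c) (laurentRepT_mul_self c))
    ⟨laurentRepPi q y, laurentRepPi q y, laurentRepPi_mul_self q y, laurentRepPi_mul_self q y⟩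
    rfl
    (Units.ext (LinearMap.ext (laurentRepT_smul_laurentRepT c)))
    (Units.ext (laurentRepPi_mul_self q y))
    (Units.ext (LinearMap.ext (laurentRepPi_T_neg_one_smul q y)))

lemma inducedRep_Y_apply (c : k) (q y : kˣ) :
    (inducedRep c q y).Y.1 (1, 0) = (y : k) • (1, 0) := by
  change laurentRepPi q y (laurentRepT c (1, 0)) = _
  simp [laurentRepT_apply, laurentRepPi_apply, demazure_one]

lemma inducedRep_monomial_apply (c : k) (q y : kˣ) (p : ℤ × Bool × ℤ) :
    (inducedRep c q y).monomial p (1, 0) =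
      (↑(y ^ p.2.2) : k) • (T p.1 : k[T;T⁻¹]) •
        if p.2.1 then ((0, 1) : LaurentPair k) else (1, 0) := by
  obtain ⟨i, e, j⟩ := p
  rw [DahaTriple.monomial, Units.val_mul, Module.End.mul_apply,
    zpow_apply_of_apply_eq_smul (inducedRep_Y_apply c q y), map_smul, Units.val_mul,
    Module.End.mul_apply]
  change _ • (↑(laurentRepX k ^ i) : Module.End k (LaurentPair k)) _ = _
  rw [laurentRepX_zpow_apply]
  cases e
  · rfl
  · change _ • _ • laurentRepT c (1, 0) = _
    simp [laurentRepT_apply, demazure_one]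

end Laurent

namespace DahaTriple

open scoped LaurentPolynomial

variable {R : Type*} [CommRing R]

/-- The representation over `R[y, y⁻¹]` induced from `Y ↦ y`. It turns out to be the regular
representation, written in PBW monomials. -/
noncomputable def regularRep (c : R) (q : Rˣ) :
    DahaTriple c q (Module.End R[T;T⁻¹] (LaurentPair R[T;T⁻¹])) :=
  (inducedRep (algebraMap R R[T;T⁻¹] c)
    (Units.map (algebraMap R R[T;T⁻¹] : R →* R[T;T⁻¹]) q) (laurentX R)).restrictScalars

lemma linearIndependent_regularRep_monomial (c : R) (q : Rˣ) :
    LinearIndependent R (regularRep c q).monomial := by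
  refine LinearIndependent.of_comp
    (LinearMap.applyₗ' R ((1, 0) : LaurentPair R[T;T⁻¹])) ?_
  have hinj : Function.Injective fun p : ℤ × Bool × ℤ => (p.2.2, p.1, p.2.1) := by
    rintro ⟨i, e, j⟩ ⟨i', e', j'⟩ h
    simp_all
  have h := (linearIndependent_smul (linearIndependent_laurentT (k := R))
    (linearIndependent_smul linearIndependent_laurentT linearIndependent_inl_inr)).comp _ hinj
  convert h using 1
  ext1 p
  refine (inducedRep_monomial_apply _ _ _ p).trans ?_
  rw [val_laurentX_zpow]
  rfl

end DahaTriple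

theorem daha_pbw_general {R : Type*} {H : Type*} [CommRing R] [Ring H] [Algebra R H] {c : R}
    {q : Rˣ} {d : DahaTriple c q H} (hd : d.IsUniversal) :
    LinearIndependent R d.monomial ∧ Submodule.span R (Set.range d.monomial) = ⊤ := by
  refine ⟨?_, d.monomialSpan_eq_top hd.adjoin_eq_top⟩
  obtain ⟨φ, hφ⟩ := hd.exists_map_eq (DahaTriple.regularRep c q)
  refine LinearIndependent.of_comp φ.toLinearMap ?_
  rw [AlgHom.coe_toLinearMap, ← DahaTriple.monomial_map, hφ]
  exact DahaTriple.linearIndependent_regularRep_monomial c q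

/-! ### The algebra `H^{ell}` -/

lemma ite_pow_toNat_eq_zpow {M : Type*} [Monoid M] (u : Mˣ) (i : ℤ) :
    (if 0 ≤ i then (u : M) ^ i.toNat else (↑u⁻¹ : M) ^ (-i).toNat) = ↑(u ^ i) := by
  split_ifs with h
  · lift i to ℕ using h
    simp
  · obtain ⟨n, rfl⟩ : ∃ n : ℕ, i = -n := ⟨(-i).toNat, by omega⟩
    simp

lemma dahaTau_mul_dahaTauInv : dahaTau * dahaTauInv = 1 := by
  rw [dahaTau, dahaTauInv, ← map_mul, ← LaurentPolynomial.T_add, add_neg_cancel,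
    LaurentPolynomial.T_zero, map_one]

namespace Daha

/-- The ring structure of `H^{ell}`, which instance search does not find; it extends the semiring
structure of the quotient definitionally. -/
noncomputable instance instRing : Ring Daha := Algebra.semiringToRing DahaR

/-- The quotient map from the free algebra. -/
noncomputable abbrev mk : FreeAlgebra DahaR (Fin 5) →ₐ[DahaR] Daha :=
  RingQuot.mkAlgHom DahaR DahaRel

lemma mk_eq {a b : FreeAlgebra DahaR (Fin 5)} (h : DahaRel a b) : mk a = mk b :=
  RingQuot.mkAlgHom_rel DahaR h

lemma T_mul_T : T * T = (dahaTau - dahaTauInv) • T + 1 := by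
  have h := mk_eq .hecke
  rw [map_mul, map_sub, map_add, AlgHom.commutes, AlgHom.commutes, map_zero] at h
  exact (mul_self_eq_of_hecke dahaTau_mul_dahaTauInv).1 h

/-- The generators of `H^{ell}` as a triple of units. -/
noncomputable def triple :
    DahaTriple (dahaTau - dahaTauInv) (laurentX (LaurentPolynomial ℂ)) Daha where
  X := ⟨X, Xinv, by rw [X, Xinv, ← map_mul, mk_eq .X_Xinv, map_one],
    by rw [X, Xinv, ← map_mul, mk_eq .Xinv_X, map_one]⟩
  Y := ⟨Y, Yinv, by rw [Y, Yinv, ← map_mul, mk_eq .Y_Yinv, map_one],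
    by rw [Y, Yinv, ← map_mul, mk_eq .Yinv_Y, map_one]⟩
  T := heckeUnit _ T T_mul_T
  val_inv_T := rfl
  T_mul_X_mul_T := Units.ext (by simpa only [map_mul] using! mk_eq .TXT)
  T_mul_inv_Y_mul_T := Units.ext (by simpa only [map_mul] using! mk_eq .TYinvT)
  cross := Units.ext (by simpa only [map_mul, AlgHom.commutes] using! mk_eq .cross)

lemma triple_monomial :
    triple.monomial = fun p => Xpow p.1 * (if p.2.1 then T else 1) * Ypow p.2.2 := by
  ext p
  rw [DahaTriple.monomial, Units.val_mul, Units.val_mul, ← ite_pow_toNat_eq_zpow,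
    ← ite_pow_toNat_eq_zpow, apply_ite Units.val]
  rfl

/-- The values on the generators of the homomorphism attached to a triple. -/
noncomputable def generatorImages {A : Type*} [Ring A] [Algebra DahaR A] {c : DahaR} {q : DahaRˣ}
    (e : DahaTriple c q A) : Fin 5 → A :=
  ![e.X, ↑e.X⁻¹, e.Y, ↑e.Y⁻¹, e.T]

lemma lift_generatorImages_eq {A : Type*} [Ring A] [Algebra DahaR A]
    (e : DahaTriple (dahaTau - dahaTauInv) (laurentX (LaurentPolynomial ℂ)) A)
    ⦃a b : FreeAlgebra DahaR (Fin 5)⦄ (h : DahaRel a b) :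
    FreeAlgebra.lift DahaR (generatorImages e) a =
      FreeAlgebra.lift DahaR (generatorImages e) b := by
  cases h <;> simp only [map_mul, map_sub, map_add, map_one, map_zero, AlgHom.commutes,
    FreeAlgebra.lift_ι_apply]
  case X_Xinv => exact e.X.mul_inv
  case Xinv_X => exact e.X.inv_mul
  case Y_Yinv => exact e.Y.mul_inv
  case Yinv_Y => exact e.Y.inv_mul
  case hecke => exact (mul_self_eq_of_hecke dahaTau_mul_dahaTauInv).2 e.T_mul_T
  case TXT => exact congrArg Units.val e.T_mul_X_mul_T
  case TYinvT => exact congrArg Units.val e.T_mul_inv_Y_mul_T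
  case cross => exact congrArg Units.val e.cross

lemma adjoin_triple_eq_top :
    Algebra.adjoin DahaR
      ({↑triple.X, ↑triple.X⁻¹, ↑triple.Y, ↑triple.Y⁻¹, ↑triple.T} : Set Daha) = ⊤ := by
  refine top_le_iff.1 ?_
  rw [← (AlgHom.range_eq_top _).2 (RingQuot.mkAlgHom_surjective DahaR DahaRel),
    ← Algebra.map_top, ← FreeAlgebra.adjoin_range_ι, AlgHom.map_adjoin]
  refine Algebra.adjoin_mono ?_
  rintro _ ⟨_, ⟨i, rfl⟩, rfl⟩
  fin_cases i
  exacts [.inl rfl, .inr (.inl rfl), .inr (.inr (.inl rfl)), .inr (.inr (.inr (.inl rfl))),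
    .inr (.inr (.inr (.inr rfl)))]

theorem isUniversal_triple : triple.IsUniversal where
  adjoin_eq_top := adjoin_triple_eq_top
  exists_map_eq e := by
    let φ := RingQuot.liftAlgHom DahaR
      ⟨FreeAlgebra.lift DahaR (generatorImages e), lift_generatorImages_eq e⟩
    have hφ (i : Fin 5) : φ (mk (ι DahaR i)) = generatorImages e i :=
      (RingQuot.liftAlgHom_mkAlgHom_apply ..).trans (FreeAlgebra.lift_ι_apply ..)
    exact ⟨φ, DahaTriple.ext (Units.ext (hφ 0)) (Units.ext (hφ 2)) (Units.ext (hφ 4))⟩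

end Daha

/-- Triangular decomposition (PBW theorem) for the double affine Hecke algebra of
type `A₁`: the monomials `X^i T^ε Y^j` (`i, j ∈ ℤ`, `ε ∈ {0,1}`) form an `R`-basis
of `H^{ell}`, i.e. `H^{ell} = ℂ[X^{±1}] ⊗ H ⊗ ℂ[Y^{±1}]`. -/
theorem daha_pbw :
    LinearIndependent DahaR
      (fun p : ℤ × Bool × ℤ =>
        Daha.Xpow p.1 * (if p.2.1 then Daha.T else 1) * Daha.Ypow p.2.2) ∧
    Submodule.span DahaR
        (Set.range fun p : ℤ × Bool × ℤ =>
          Daha.Xpow p.1 * (if p.2.1 then Daha.T else 1) * Daha.Ypow p.2.2) = ⊤ := by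
  rw [← Daha.triple_monomial]
  exact daha_pbw_general Daha.isUniversal_triple
end

section
/- Let R[X^{±1}] be the Laurent polynomial ring over R, ŝ the R-algebra involution determined by X ↦ X⁻¹, p̂ the R-algebra endomorphism determined by X ↦ q⁻¹·X, and T̂ the R-linear endomorphism T̂(f) = τ·ŝ(f) + (τ − τ⁻¹)·g, where g is the unique Laurent polynomial with (X² − 1)·g = ŝ(f) − f (for every Laurent polynomial f, ŝ(f) − f is divisible by X² − 1). Then there is a unique homomorphism of R-algebras Φ : H^{ell} → End_R(R[X^{±1}]) with Φ(X) = (multiplication by X), Φ(T) = T̂, and Φ(Y) = ŝ ∘ p̂ ∘ T̂, and Φ is injective (the faithful polynomial representation of the double affine Hecke algebra of type A₁). -/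
open FreeAlgebra

/-- The Laurent polynomial ring `R[X^{±1}]`, the underlying space of the polynomial
representation of the double affine Hecke algebra of type `A₁`. -/
abbrev DahaPolyRep : Type := LaurentPolynomial DahaR

set_option synthInstance.maxHeartbeats 1000000

/-!
The element `π = Y T⁻¹` turns the relations involving `Y` into `π² = 1` and `q π X = X⁻¹ π`, so that
in the polynomial representation `π` acts as the algebra involution `X ↦ q⁻¹ X⁻¹`, while `T` acts as
the Demazure–Lusztig operator. The relations also show that the words `Y ^ k` and `T Y ^ k` span the
algebra over the Laurent polynomials in `X`. These words are indexed by the infinite dihedral group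
generated by `X ↦ X⁻¹` and `X ↦ q⁻¹ X⁻¹`, and each acts as a nonzero multiple (over the fraction
field) of its group element plus a combination of group elements of smaller Coxeter length. Since
`q` is not a root of unity, the group elements are distinct automorphisms of `R[X^{±1}]`, hence
linearly independent by Dedekind's lemma. By triangularity so are the images of the spanning words,
and the representation is faithful.
-/

namespace DahaPolyRep

open LaurentPolynomial

/-! ### Triangular families -/

section Triangular

variable {P V I : Type*} [CommRing P] [AddCommGroup V] [Module P V]
  {v : I → V} {len : I → ℕ}

variable (P v len) in
/-- The `m`-th step of the length filtration of `span v`: the span of the `v j` of length `< m`. -/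
def spanLengthLT (m : ℕ) : Submodule P V :=
  Submodule.span P (v '' {j | len j < m})

variable (P v len) in
/-- The vector `w` has leading term `v i`: up to nonzero factors on both sides (so over the
fraction field of `P`), `w` equals `v i` modulo the `v j` that are shorter than `v i`. -/
def HasLeadingTerm (i : I) (w : V) : Prop :=
  ∃ d a : P, d ≠ 0 ∧ a ≠ 0 ∧ d • w - a • v i ∈ spanLengthLT P v len (len i)

lemma spanLengthLT_mono : Monotone (spanLengthLT P v len) := fun _ _ hmn =>
  Submodule.span_mono (Set.image_mono fun _ hj => lt_of_lt_of_le hj hmn)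

lemma mem_spanLengthLT {j : I} {m : ℕ} (hj : len j < m) : v j ∈ spanLengthLT P v len m :=
  Submodule.subset_span ⟨j, hj, rfl⟩

lemma map_mem_spanLengthLT_succ {ρ : P →+* P} (r : V →ₛₗ[ρ] V) {γ : I → I}
    (hr : ∀ j, r (v j) = v (γ j)) (hlen : ∀ j, len (γ j) ≤ len j + 1) {m : ℕ} {w : V}
    (hw : w ∈ spanLengthLT P v len m) : r w ∈ spanLengthLT P v len (m + 1) := by
  suffices spanLengthLT P v len m ≤ (spanLengthLT P v len (m + 1)).comap r from this hw
  rintro _ hw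
  refine Submodule.span_le.2 ?_ hw
  rintro _ ⟨j, hj, rfl⟩
  rw [SetLike.mem_coe, Submodule.mem_comap, hr]
  exact mem_spanLengthLT ((hlen j).trans_lt (Nat.succ_lt_succ hj))

lemma linearIndependent_of_smul [IsDomain P] {w : I → V} {d : I → P} (hd : ∀ i, d i ≠ 0)
    (h : LinearIndependent P fun i => d i • w i) : LinearIndependent P w := by
  classical
  rw [linearIndependent_iff'] at h ⊢
  intro s c hc i hi
  -- `d i • w i` occurs in `(∏ j ∈ s, d j) • ∑ i ∈ s, c i • w i` with the other factors `d j`.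
  have hsum : ∑ i ∈ s, (c i * ∏ j ∈ s.erase i, d j) • d i • w i = 0 := by
    calc _ = ∑ i ∈ s, (∏ j ∈ s, d j) • c i • w i := Finset.sum_congr rfl fun i hi => by
          rw [smul_smul, smul_smul, mul_assoc, Finset.prod_erase_mul _ _ hi, mul_comm]
      _ = 0 := by rw [← Finset.smul_sum, hc, smul_zero]
  exact (mul_eq_zero.1 (h s _ hsum i hi)).resolve_right
    (Finset.prod_ne_zero_iff.2 fun j _ => hd j)

lemma linearIndependent_of_triangular [IsDomain P] (hv : LinearIndependent P v) {w : I → V}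
    {a : I → P} (ha : ∀ i, a i ≠ 0)
    (hw : ∀ i, w i - a i • v i ∈ spanLengthLT P v len (len i)) : LinearIndependent P w := by
  classical
  rw [linearIndependent_iff']
  intro s c hc
  by_contra! hne
  obtain ⟨i₀, hi₀, hmax⟩ := Finset.exists_max_image {i ∈ s | c i ≠ 0} len
    (by simpa [Finset.Nonempty] using hne)
  obtain ⟨hi₀s, hci₀⟩ := Finset.mem_filter.1 hi₀
  let N : Submodule P V := Submodule.span P (v '' (Set.univ \ {i₀}))
  have hlower : ∀ i, len i ≤ len i₀ → spanLengthLT P v len (len i) ≤ N := fun i hi =>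
    Submodule.span_mono <| Set.image_mono fun j (hj : len j < len i) =>
      ⟨trivial, fun hji => absurd (hj.trans_le hi) (by rw [hji]; exact lt_irrefl _)⟩
  have hother : ∑ i ∈ s.erase i₀, c i • w i ∈ N := sum_mem fun i hi => by
    obtain ⟨hii₀, his⟩ := Finset.mem_erase.1 hi
    by_cases hci : c i = 0
    · simp [hci]
    · have hvi : v i ∈ N := Submodule.subset_span ⟨i, ⟨trivial, hii₀⟩, rfl⟩
      rw [← sub_add_cancel (w i) (a i • v i)]
      exact N.smul_mem _ (N.add_mem (hlower i (hmax i (by simp [his, hci])) (hw i))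
        (N.smul_mem _ hvi))
  have hlead : (c i₀ * a i₀) • v i₀ ∈ N := by
    have hsplit : (c i₀ * a i₀) • v i₀ =
        -(∑ i ∈ s.erase i₀, c i • w i) - c i₀ • (w i₀ - a i₀ • v i₀) := by
      rw [← Finset.add_sum_erase _ _ hi₀s] at hc
      rw [eq_neg_of_add_eq_zero_right hc]
      module
    rw [hsplit]
    exact N.sub_mem (N.neg_mem hother) (N.smul_mem _ (hlower i₀ le_rfl (hw i₀)))
  exact mul_ne_zero hci₀ (ha i₀) (linearIndependent_iff_eq_zero_of_smul_mem_span.1 hv i₀ _ hlead)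

lemma linearIndependent_of_hasLeadingTerm [IsDomain P] (hv : LinearIndependent P v) {w : I → V}
    (hw : ∀ i, HasLeadingTerm P v len i (w i)) : LinearIndependent P w := by
  choose d a hd ha h using hw
  exact linearIndependent_of_smul hd (linearIndependent_of_triangular hv ha h)

lemma HasLeadingTerm.map [IsDomain P] {ρ : P →+* P} (hρ : Function.Injective ρ) (r : V →ₛₗ[ρ] V)
    {γ : I → I} (hr : ∀ j, r (v j) = v (γ j)) (hlen : ∀ j, len (γ j) ≤ len j + 1)
    {D α β : P} (hD : D ≠ 0) (hα : α ≠ 0) {w w' : V} (hw' : D • w' = α • r w + β • w) {i : I}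
    (hi : len (γ i) = len i + 1) (h : HasLeadingTerm P v len i w) :
    HasLeadingTerm P v len (γ i) w' := by
  obtain ⟨d, a, hd, ha, hw⟩ := h
  refine ⟨d * ρ d * D, d * α * ρ a, mul_ne_zero (mul_ne_zero hd ((map_ne_zero_iff ρ hρ).2 hd)) hD,
    mul_ne_zero (mul_ne_zero hd hα) ((map_ne_zero_iff ρ hρ).2 ha), ?_⟩
  have hexpand : (d * ρ d * D) • w' - (d * α * ρ a) • v (γ i) = (d * α) • r (d • w - a • v i) +
      (ρ d * β) • (d • w - a • v i) + (ρ d * β * a) • v i := by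
    rw [mul_smul, hw', map_sub, map_smulₛₗ, map_smulₛₗ, hr]
    module
  rw [hexpand, hi]
  refine add_mem (add_mem ?_ ?_) ?_ <;> refine Submodule.smul_mem _ _ ?_
  · exact map_mem_spanLengthLT_succ r hr hlen hw
  · exact spanLengthLT_mono (Nat.le_succ _) hw
  · exact mem_spanLengthLT (Nat.lt_succ_self _)

end Triangular

/-! ### The infinite dihedral group -/

/-- Index set for the infinite dihedral group of substitutions in `X`: `rot k` stands for
`X ↦ q ^ k X` and `ref k` for `X ↦ q ^ k X⁻¹`. -/
inductive DihedralIndex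
  | rot (k : ℤ)
  | ref (k : ℤ)

namespace DihedralIndex

/-- Left multiplication by the simple reflection `X ↦ X⁻¹`. -/
def s : DihedralIndex → DihedralIndex
  | rot k => ref k
  | ref k => rot k

/-- Left multiplication by the simple reflection `X ↦ q⁻¹ X⁻¹`. -/
def pi : DihedralIndex → DihedralIndex
  | rot k => ref (k - 1)
  | ref k => rot (k + 1)

/-- The Coxeter length with respect to the two simple reflections. -/
def len : DihedralIndex → ℕ
  | rot k => (2 * k).natAbs
  | ref k => (2 * k + 1).natAbs

lemma s_s (i : DihedralIndex) : i.s.s = i := by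
  cases i <;> rfl

lemma pi_pi (i : DihedralIndex) : i.pi.pi = i := by
  cases i <;> simp [pi]

lemma len_s_le (i : DihedralIndex) : i.s.len ≤ i.len + 1 := by
  cases i <;> simp only [s, len] <;> omega

lemma len_pi_le (i : DihedralIndex) : i.pi.len ≤ i.len + 1 := by
  cases i <;> simp only [pi, len] <;> omega

lemma exists_len_lt (i : DihedralIndex) :
    i = rot 0 ∨ i.len = i.s.len + 1 ∨ i.len = i.pi.len + 1 := by
  cases i <;> simp only [rot.injEq, reduceCtorEq, s, pi, len] <;> omega

lemma induction_len {motive : DihedralIndex → Prop} (one : motive (rot 0))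
    (s : ∀ i, i.s.len = i.len + 1 → motive i → motive i.s)
    (pi : ∀ i, i.pi.len = i.len + 1 → motive i → motive i.pi) (i : DihedralIndex) :
    motive i := by
  induction hn : i.len using Nat.strong_induction_on generalizing i with
  | _ n ih =>
    subst hn
    rcases i.exists_len_lt with rfl | hi | hi
    · exact one
    · have := s i.s (by rw [s_s, hi]) (ih _ (by omega) _ rfl)
      rwa [s_s] at this
    · have := pi i.pi (by rw [pi_pi, hi]) (ih _ (by omega) _ rfl)
      rwa [pi_pi] at this

end DihedralIndex

/-! ### Automorphisms of the Laurent polynomial ring -/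

section Laurent

variable {K A : Type*} [CommRing K] [Semiring A] [Algebra K A]

/-- The unit `X` of `K[X^{±1}]`. -/
noncomputable def unitT : K[T;T⁻¹]ˣ where
  val := T 1
  inv := T (-1)
  val_inv := by rw [← T_add]; rfl
  inv_val := by rw [← T_add]; rfl

lemma val_unitT_zpow (k : ℤ) : ((unitT ^ k : K[T;T⁻¹]ˣ) : K[T;T⁻¹]) = T k := by
  induction k using Int.induction_on with
  | zero => rfl
  | succ n ih => rw [zpow_add_one, Units.val_mul, ih, T_add]; rfl
  | pred n ih => rw [zpow_sub_one, Units.val_mul, ih, sub_eq_add_neg, T_add]; rfl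

/-- Evaluation of Laurent polynomials at a unit `u`, that is, the algebra map with `X ↦ u`. -/
noncomputable def evalUnit (u : Aˣ) : K[T;T⁻¹] →ₐ[K] A :=
  AddMonoidAlgebra.lift K A ℤ ((Units.coeHom A).comp (zpowersHom Aˣ u))

lemma evalUnit_T (u : Aˣ) (n : ℤ) : evalUnit (K := K) u (T n) = (u ^ n : Aˣ) := by
  rw [evalUnit, T, AddMonoidAlgebra.lift_single, one_smul]
  rfl

lemma laurent_algHom_ext {f g : K[T;T⁻¹] →ₐ[K] A} (h : f (T 1) = g (T 1)) : f = g := by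
  refine AddMonoidAlgebra.algHom_ext' (MonoidHom.ext_mint h) ?_
  ext

lemma map_laurent_smul {M N : Type*} [AddCommGroup M] [Module K M] [Module K[T;T⁻¹] M]
    [IsScalarTower K K[T;T⁻¹] M] [AddCommGroup N] [Module K N] [Module K[T;T⁻¹] N]
    [IsScalarTower K K[T;T⁻¹] N] (σ : K[T;T⁻¹] →ₐ[K] K[T;T⁻¹]) (φ : M →ₗ[K] N)
    (hφ : ∀ m, φ ((T 1 : K[T;T⁻¹]) • m) = σ (T 1) • φ m) (f : K[T;T⁻¹]) (m : M) :
    φ (f • m) = σ f • φ m := by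
  have hφ_inv (m : M) : φ ((T (-1) : K[T;T⁻¹]) • m) = σ (T (-1)) • φ m := by
    have := hφ ((T (-1) : K[T;T⁻¹]) • m)
    rw [smul_smul, ← T_add, add_neg_cancel, T_zero, one_smul] at this
    rw [this, smul_smul, ← map_mul, ← T_add, neg_add_cancel, T_zero, map_one, one_smul]
  induction f using LaurentPolynomial.induction_on generalizing m with
  | h_C a =>
    rw [C_eq_algebraMap, σ.commutes, algebraMap_smul, algebraMap_smul, map_smul]
  | h_add hf hg => rw [add_smul, map_add, hf, hg, map_add, add_smul]
  | h_C_mul_T n a ih => rw [T_add, ← mul_assoc, mul_smul, ih, hφ, smul_smul, ← map_mul]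
  | h_C_mul_T_Z n a ih =>
    rw [sub_eq_add_neg, T_add, ← mul_assoc, mul_smul, ih, hφ_inv, smul_smul, ← map_mul]

end Laurent

section Subst

variable {K : Type*} [CommRing K] (q : Kˣ)

/-- The automorphism `X ↦ q ^ k X` (index `rot k`) or `X ↦ q ^ k X⁻¹` (index `ref k`) of
`K[X^{±1}]`. -/
noncomputable def subst : DihedralIndex → K[T;T⁻¹] →ₐ[K] K[T;T⁻¹]
  | .rot k => evalUnit (q ^ k • unitT)
  | .ref k => evalUnit (q ^ k • unitT⁻¹)

/-- The involution `X ↦ q⁻¹ X⁻¹`, the composite of `X ↦ X⁻¹` after `X ↦ q⁻¹ X`. -/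
noncomputable abbrev piHat : K[T;T⁻¹] →ₐ[K] K[T;T⁻¹] := subst q (.ref (-1))

lemma subst_rot (k : ℤ) : subst q (.rot k) (T 1) = C ((q ^ k : Kˣ) : K) * T 1 := by
  rw [subst, evalUnit_T, zpow_one, Units.val_smul, Units.smul_def, smul_eq_C_mul]
  rfl

lemma subst_ref (k : ℤ) : subst q (.ref k) (T 1) = C ((q ^ k : Kˣ) : K) * T (-1) := by
  rw [subst, evalUnit_T, zpow_one, Units.val_smul, Units.smul_def, smul_eq_C_mul]
  rfl

lemma subst_ref_inv (k : ℤ) : subst q (.ref k) (T (-1)) = C ((q ^ (-k) : Kˣ) : K) * T 1 := by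
  rw [subst, evalUnit_T, zpow_neg_one, zpow_neg, ← smul_eq_C_mul]
  rfl

lemma subst_one : subst q (.rot 0) = AlgHom.id K _ :=
  laurent_algHom_ext (by rw [subst_rot, zpow_zero, Units.val_one, map_one, one_mul]; rfl)

lemma invert_comp_subst (i : DihedralIndex) :
    (invert : K[T;T⁻¹] ≃ₐ[K] K[T;T⁻¹]).toAlgHom.comp (subst q i) = subst q i.s := by
  apply laurent_algHom_ext
  change invert (subst q i (T 1)) = _
  cases i <;>
    simp only [DihedralIndex.s, subst_rot, subst_ref, map_mul, invert_C, invert_T, neg_neg]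

lemma piHat_comp_subst (i : DihedralIndex) : (piHat q).comp (subst q i) = subst q i.pi := by
  apply laurent_algHom_ext
  rw [AlgHom.comp_apply]
  cases i <;>
    rw [DihedralIndex.pi, subst_rot, subst_ref, map_mul, C_eq_algebraMap, AlgHom.commutes,
      ← C_eq_algebraMap]
  · rw [subst_ref, ← mul_assoc, ← map_mul, ← Units.val_mul, ← zpow_add, sub_eq_add_neg]
  · rw [subst_ref_inv, ← mul_assoc, ← map_mul, ← Units.val_mul, ← zpow_add, neg_neg]

lemma piHat_piHat (f : K[T;T⁻¹]) : piHat q (piHat q f) = f := by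
  rw [← AlgHom.comp_apply, piHat_comp_subst]
  exact DFunLike.congr_fun (subst_one q) f

variable {q} in
lemma comp_eq_piHat {s p : K[T;T⁻¹] →ₐ[K] K[T;T⁻¹]} (hs : s (T 1) = T (-1))
    (hp : p (T 1) = C ((q⁻¹ : Kˣ) : K) * T 1) : s.comp p = piHat q := by
  apply laurent_algHom_ext
  rw [AlgHom.comp_apply, hp, map_mul, hs, subst_ref, zpow_neg_one, C_eq_algebraMap, s.commutes]

/-- The involution `piHat q` as a unit of the algebra of `K`-linear endomorphisms. -/
noncomputable def piHatUnit : (Module.End K K[T;T⁻¹])ˣ where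
  val := (piHat q).toLinearMap
  inv := (piHat q).toLinearMap
  val_inv := LinearMap.ext (piHat_piHat q)
  inv_val := LinearMap.ext (piHat_piHat q)

lemma smul_piHat_mul_T : (q : K) • ((piHat q).toLinearMap * LinearMap.mulLeft K (T 1)) =
    LinearMap.mulLeft K (T (-1)) * (piHat q).toLinearMap := by
  refine LinearMap.ext fun f => ?_
  simp only [LinearMap.smul_apply, Module.End.mul_apply, LinearMap.mulLeft_apply,
    AlgHom.toLinearMap_apply, map_mul, subst_ref, zpow_neg_one]
  rw [← smul_eq_C_mul, smul_mul_assoc, smul_smul, q.mul_inv, one_smul]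

variable {q} in
lemma subst_injective [Nontrivial K] (hq : Function.Injective fun k : ℤ => q ^ k) :
    Function.Injective (subst q) := by
  intro i j hij
  have hT : subst q i (T 1) = subst q j (T 1) := by rw [hij]
  cases i <;> cases j <;>
    simp only [subst_rot, subst_ref, ← single_eq_C_mul_T, AddMonoidAlgebra.single_inj,
      Units.ne_zero, Units.val_inj, hq.eq_iff] at hT <;> grind

variable {q} in
lemma linearIndependent_subst [IsDomain K] (hq : Function.Injective fun k : ℤ => q ^ k) :
    LinearIndependent K[T;T⁻¹] fun i => (subst q i).toLinearMap :=
  (linearIndependent_toLinearMap K K[T;T⁻¹] K[T;T⁻¹]).comp _ (subst_injective hq)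

end Subst

/-! ### Demazure–Lusztig operators -/

section DemazureLusztig

variable {K : Type*} [CommRing K] {τ : Kˣ} {Th : Module.End K K[T;T⁻¹]}

/-- `Th` is the Demazure–Lusztig operator `f ↦ τ s(f) + (τ - τ⁻¹) (s(f) - f) / (X² - 1)` with
`s : X ↦ X⁻¹`; the division is expressed by multiplying through with `X² - 1`. -/
def IsDemazureLusztig (τ : Kˣ) (Th : Module.End K K[T;T⁻¹]) : Prop :=
  ∀ f, (T 2 - 1) * Th f =
    (τ : K) • ((T 2 - 1) * invert f) + ((τ : K) - (τ⁻¹ : Kˣ)) • (invert f - f)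

lemma T_two_sub_one_ne_zero [Nontrivial K] : (T 2 - 1 : K[T;T⁻¹]) ≠ 0 := by
  rw [← T_zero, sub_ne_zero, T, T]
  exact (AddMonoidAlgebra.single_left_injective one_ne_zero).ne two_ne_zero

lemma C_mul_T_two_sub_C_ne_zero [Nontrivial K] (a b : Kˣ) :
    (C (a : K) * T 2 - C (b : K) : K[T;T⁻¹]) ≠ 0 := by
  rw [← mul_one (C (b : K)), ← T_zero, sub_ne_zero, ← single_eq_C_mul_T, ← single_eq_C_mul_T, Ne,
    AddMonoidAlgebra.single_inj]
  simp

namespace IsDemazureLusztig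

lemma mul_apply (h : IsDemazureLusztig τ Th) (f : K[T;T⁻¹]) :
    (T 2 - 1) * Th f = (C (τ : K) * T 2 - C ((τ⁻¹ : Kˣ) : K)) * invert f -
      (C (τ : K) - C ((τ⁻¹ : Kˣ) : K)) * f := by
  rw [h, smul_eq_C_mul, smul_eq_C_mul, map_sub]
  ring

lemma mul_invert_apply (h : IsDemazureLusztig τ Th) (f : K[T;T⁻¹]) :
    (T 2 - 1) * invert (Th f) = (C ((τ⁻¹ : Kˣ) : K) * T 2 - C (τ : K)) * f +
      (C (τ : K) - C ((τ⁻¹ : Kˣ) : K)) * T 2 * invert f := by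
  have hinv := congrArg invert (h.mul_apply f)
  simp only [map_mul, map_sub, map_one, invert_T, invert_C, involutive_invert f] at hinv
  have hT : (T 2 * T (-2) : K[T;T⁻¹]) = 1 := by rw [← T_add]; rfl
  linear_combination (invert (Th f) - C (τ : K) * f) * hT - T 2 * hinv

variable [IsDomain K]

lemma hecke (h : IsDemazureLusztig τ Th) :
    (Th - algebraMap K _ (τ : K)) * (Th + algebraMap K _ ((τ⁻¹ : Kˣ) : K)) = 0 := by
  refine LinearMap.ext fun f => mul_left_cancel₀ (pow_ne_zero 2 T_two_sub_one_ne_zero) ?_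
  simp only [Module.End.mul_apply, LinearMap.sub_apply, LinearMap.add_apply,
    Module.algebraMap_end_apply, map_add, map_smul, LinearMap.zero_apply]
  simp only [smul_eq_C_mul]
  have h₁ := h.mul_apply f
  have h₂ := h.mul_invert_apply f
  have h₃ := h.mul_apply (Th f)
  set a : K[T;T⁻¹] := C (τ : K)
  set b : K[T;T⁻¹] := C ((τ⁻¹ : Kˣ) : K)
  linear_combination (T 2 - 1) * h₃ + (a * T 2 - b) * h₂ - (a - b) * T 2 * h₁

lemma mul_T_mul (h : IsDemazureLusztig τ Th) :
    Th * LinearMap.mulLeft K (T 1) * Th = LinearMap.mulLeft K (T (-1)) := by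
  refine LinearMap.ext fun f => mul_left_cancel₀ (pow_ne_zero 2 T_two_sub_one_ne_zero) ?_
  simp only [Module.End.mul_apply, LinearMap.mulLeft_apply]
  have hT : (T 1 : K[T;T⁻¹]) = T (-1) * T 2 := by rw [← T_add]; rfl
  have hτ : (C (τ : K) * C ((τ⁻¹ : Kˣ) : K) : K[T;T⁻¹]) = 1 := by
    rw [← map_mul, τ.mul_inv, map_one]
  have h₁ := h.mul_apply f
  have h₂ := h.mul_invert_apply f
  have h₃ := h.mul_apply (T 1 * Th f)
  rw [map_mul invert, invert_T] at h₃
  set a : K[T;T⁻¹] := C (τ : K)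
  set b : K[T;T⁻¹] := C ((τ⁻¹ : Kˣ) : K)
  linear_combination (T 2 - 1) * h₃ + (a * T 2 - b) * T (-1) * h₂ - (a - b) * T 1 * h₁ +
    (T 2 - 1) ^ 2 * T (-1) * f * hτ -
    (a - b) * ((a * T 2 - b) * invert f - (a - b) * f) * hT

end IsDemazureLusztig
end DemazureLusztig

/-! ### Consequences of the relations -/

section Word

variable {G : Type*} [Group G] {z x π t : G}

/-- The elements `Y ^ k` (index `rot k`) and `T * Y ^ k` (index `ref k`) with `Y = π * t`, `T = t`,
which span the double affine Hecke algebra over the Laurent polynomials in `X`. -/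
def word (π t : G) : DihedralIndex → G
  | .rot k => (π * t) ^ k
  | .ref k => t * (π * t) ^ k

lemma word_one : word π t (.rot 0) = 1 :=
  zpow_zero _

lemma word_s (i : DihedralIndex) :
    word π t i.s = t * word π t i ∨ word π t i.s = t⁻¹ * word π t i := by
  cases i
  · exact .inl rfl
  · exact .inr (inv_mul_cancel_left _ _).symm

lemma word_pi (hπ : π * π = 1) (i : DihedralIndex) : word π t i.pi = π * word π t i := by
  cases i with
  | rot k =>
    have hk : (π * t) ^ k = π * t * (π * t) ^ (k - 1) := by rw [mul_self_zpow, sub_add_cancel]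
    rw [DihedralIndex.pi, word, word, hk, ← mul_assoc, ← mul_assoc, hπ, one_mul]
  | ref k => rw [DihedralIndex.pi, word, word, ← mul_self_zpow, mul_assoc]

lemma map_word {H : Type*} [Group H] (φ : G →* H) (i : DihedralIndex) :
    φ (word π t i) = word (φ π) (φ t) i := by
  cases i <;> simp only [word, map_mul, map_zpow]

lemma mul_inv_mul_eq_iff : t * (π * t)⁻¹ * t = π * t ↔ π * π = 1 := by
  rw [mul_inv_rev, mul_inv_cancel_left, mul_left_inj, inv_eq_iff_mul_eq_one]

lemma cross_eq_iff (hz : ∀ g, Commute z g) (hx : t * x * t = x⁻¹) :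
    (π * t)⁻¹ * x⁻¹ * (π * t) * x * t * t = z ↔ z * (π * x) = x⁻¹ * π := by
  have hconj : (π * t)⁻¹ * x⁻¹ * (π * t) * x * t * t = t⁻¹ * (π⁻¹ * (x⁻¹ * π) * x⁻¹) * t := by
    rw [← hx]
    group
  rw [hconj, mul_assoc, inv_mul_eq_iff_eq_mul, ← (hz t).eq, mul_left_inj, mul_inv_eq_iff_eq_mul,
    inv_mul_eq_iff_eq_mul, ← mul_assoc π, ← (hz π).eq, mul_assoc, eq_comm]

end Word

section Module

variable {K M : Type*} [CommRing K] [AddCommGroup M] [Module K M] [Module K[T;T⁻¹] M]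
  [IsScalarTower K K[T;T⁻¹] M]

lemma smul_mem_of_T_smul_mem {L : Submodule K M}
    (hT : ∀ v ∈ L, (T 1 : K[T;T⁻¹]) • v ∈ L) (hT' : ∀ v ∈ L, (T (-1) : K[T;T⁻¹]) • v ∈ L)
    (f : K[T;T⁻¹]) {v : M} (hv : v ∈ L) : f • v ∈ L := by
  induction f using LaurentPolynomial.induction_on generalizing v with
  | h_C a => rw [C_eq_algebraMap, algebraMap_smul]; exact L.smul_mem a hv
  | h_add hf hg => rw [add_smul]; exact L.add_mem (hf hv) (hg hv)
  | h_C_mul_T n a ih => rw [T_add, ← mul_assoc, mul_smul]; exact ih (hT v hv)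
  | h_C_mul_T_Z n a ih =>
    rw [sub_eq_add_neg, T_add, ← mul_assoc, mul_smul]
    exact ih (hT' v hv)

end Module

section WordSpan

variable {K A : Type*} [CommRing K] [Ring A] [Module K[T;T⁻¹] A] {x π t : Aˣ}

lemma T_neg_one_smul (hx : ∀ v : A, (T 1 : K[T;T⁻¹]) • v = x * v)
    (v : A) : (T (-1) : K[T;T⁻¹]) • v = (x⁻¹ : Aˣ) * v := by
  rw [← x.mul_right_inj, x.mul_inv_cancel_left, ← hx, smul_smul, ← T_add, add_neg_cancel, T_zero,
    one_smul]

variable (K π t)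

/-- The `K[X^{±1}]`-submodule spanned by the words `Y ^ k` and `T * Y ^ k`. -/
noncomputable abbrev wordSpan : Submodule K[T;T⁻¹] A :=
  Submodule.span K[T;T⁻¹] (Set.range fun i => ((word π t i : Aˣ) : A))

lemma word_mem_wordSpan (i : DihedralIndex) : ((word π t i : Aˣ) : A) ∈ wordSpan K π t :=
  Submodule.subset_span ⟨i, rfl⟩

end WordSpan

section Relations

variable {K A : Type*} [CommRing K] [Ring A] [Algebra K A]

lemma mul_sub_of_hecke {τ : Kˣ} {a : A}
    (h : (a - algebraMap K A τ) * (a + algebraMap K A (τ⁻¹ : Kˣ)) = 0) :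
    a * (a - algebraMap K A (τ - (τ⁻¹ : Kˣ))) = 1 := by
  rw [sub_mul, mul_add, mul_add, ← map_mul, τ.mul_inv, map_one, Algebra.commutes] at h
  rw [map_sub, mul_sub, mul_sub, ← sub_eq_zero, ← h]
  abel

/-- An element satisfying the Hecke relation, as a unit. -/
def heckeUnit {τ : Kˣ} {a : A}
    (h : (a - algebraMap K A τ) * (a + algebraMap K A (τ⁻¹ : Kˣ)) = 0) : Aˣ where
  val := a
  inv := a - algebraMap K A (τ - (τ⁻¹ : Kˣ))
  val_inv := mul_sub_of_hecke h
  inv_val := by rw [sub_mul, Algebra.commutes, ← mul_sub, mul_sub_of_hecke h]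

lemma eq_top_of_mul_mem {S : Set A} (hS : Algebra.adjoin K S = ⊤) {N : Submodule K A}
    (one : 1 ∈ N) (mul : ∀ b ∈ S, ∀ v ∈ N, b * v ∈ N) : N = ⊤ := by
  suffices ∀ a ∈ Algebra.adjoin K S, ∀ v ∈ N, a * v ∈ N from
    Submodule.eq_top_iff'.2 fun a => mul_one a ▸ this a (hS ▸ Algebra.mem_top) 1 one
  intro a ha
  induction ha using Algebra.adjoin_induction with
  | mem b hb => exact mul b hb
  | algebraMap r => exact fun v hv => Algebra.smul_def r v ▸ N.smul_mem r hv
  | add a b _ _ ha hb => exact fun v hv => add_mul a b v ▸ N.add_mem (ha v hv) (hb v hv)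
  | mul a b _ _ ha hb => exact fun v hv => mul_assoc a b v ▸ ha _ (hb v hv)

/-- The defining relations of the double affine Hecke algebra of type `A₁` for units `X = x`,
`Y = π * t`, `T = t`, rewritten in terms of `π = Y * T⁻¹`. -/
structure IsDahaTriple (q τ : Kˣ) (x π t : Aˣ) : Prop where
  hecke : ((t : A) - algebraMap K A τ) * (t + algebraMap K A (τ⁻¹ : Kˣ)) = 0
  mul_x_mul : t * x * t = x⁻¹
  pi_mul_pi : π * π = 1
  pi_mul_x : (q : K) • (π * x : A) = (x⁻¹ : Aˣ) * π

lemma isDahaTriple_iff {q τ : Kˣ} {x π t : Aˣ} : IsDahaTriple q τ x π t ↔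
    ((t : A) - algebraMap K A τ) * (t + algebraMap K A (τ⁻¹ : Kˣ)) = 0 ∧ t * x * t = x⁻¹ ∧
      t * (π * t)⁻¹ * t = π * t ∧
      (π * t)⁻¹ * x⁻¹ * (π * t) * x * t * t = Units.map (algebraMap K A) q := by
  have hq (g : Aˣ) : Commute (Units.map (algebraMap K A : K →* A) q) g :=
    Units.ext (Algebra.commutes (q : K) (g : A))
  have hcross : (q : K) • (π * x : A) = (x⁻¹ : Aˣ) * π ↔
      Units.map (algebraMap K A : K →* A) q * (π * x) = x⁻¹ * π := by
    rw [Algebra.smul_def, ← Units.val_inj]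
    rfl
  rw [mul_inv_mul_eq_iff]
  refine ⟨fun h => ⟨h.hecke, h.mul_x_mul, h.pi_mul_pi, ?_⟩,
    fun ⟨hh, hx, hπ, hc⟩ => ⟨hh, hx, hπ, ?_⟩⟩
  · exact (cross_eq_iff hq h.mul_x_mul).2 (hcross.1 h.pi_mul_x)
  · exact hcross.2 ((cross_eq_iff hq hx).1 hc)

namespace IsDahaTriple

variable {q τ : Kˣ} {x π t : Aˣ} (h : IsDahaTriple q τ x π t)
include h

lemma map {B : Type*} [Ring B] [Algebra K B] (φ : A →ₐ[K] B) :
    IsDahaTriple q τ (Units.map φ.toMonoidHom x) (Units.map φ.toMonoidHom π)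
      (Units.map φ.toMonoidHom t) where
  hecke := by simpa using congrArg φ h.hecke
  mul_x_mul := by simp only [← map_mul, ← map_inv, h.mul_x_mul]
  pi_mul_pi := by rw [← map_mul, h.pi_mul_pi, map_one]
  pi_mul_x := by simpa using congrArg φ h.pi_mul_x

lemma t_inv : ((t⁻¹ : Aˣ) : A) = t - algebraMap K A (τ - (τ⁻¹ : Kˣ)) :=
  Units.inv_eq_of_mul_eq_one_right (mul_sub_of_hecke h.hecke)

lemma t_mul_x_mul (v : A) : t * (x * v) =
    (x⁻¹ : Aˣ) * (t * v) - ((τ : K) - (τ⁻¹ : Kˣ)) • ((x⁻¹ : Aˣ) * v) := by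
  have htx : t * x = x⁻¹ * t⁻¹ := eq_mul_inv_of_mul_eq h.mul_x_mul
  rw [← mul_assoc, ← Units.val_mul, htx, Units.val_mul, h.t_inv, mul_sub, ← Algebra.commutes,
    ← Algebra.smul_def, sub_mul, smul_mul_assoc, mul_assoc]

lemma t_mul_x_inv_mul (v : A) : t * ((x⁻¹ : Aˣ) * v) =
    x * (t * v) + ((τ : K) - (τ⁻¹ : Kˣ)) • ((x⁻¹ : Aˣ) * v) := by
  have hxv := congrArg ((x : A) * ·) (h.t_mul_x_mul ((x⁻¹ : Aˣ) * v))
  simp only [mul_sub, mul_smul_comm, x.mul_inv_cancel_left] at hxv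
  rw [hxv, sub_add_cancel]

lemma pi_mul_x_mul (v : A) : π * (x * v) = ((q⁻¹ : Kˣ) : K) • ((x⁻¹ : Aˣ) * (π * v)) := by
  rw [← mul_assoc _ (π : A), ← h.pi_mul_x, smul_mul_assoc, smul_smul, q.inv_mul, one_smul,
    mul_assoc]

section Span

variable [Module K[T;T⁻¹] A] [IsScalarTower K K[T;T⁻¹] A]
  (hx : ∀ v : A, (T 1 : K[T;T⁻¹]) • v = x * v)
include hx

lemma pi_mul_smul (f : K[T;T⁻¹]) (v : A) : π * (f • v) = piHat q f • (π * v) := by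
  refine map_laurent_smul (piHat q) (LinearMap.mulLeft K (π : A)) (fun m => ?_) f v
  rw [subst_ref, ← smul_eq_C_mul, smul_assoc, T_neg_one_smul hx, zpow_neg_one, hx]
  exact h.pi_mul_x_mul m

lemma t_mul_smul_mem {N : Submodule K[T;T⁻¹] A} (f : K[T;T⁻¹]) {v : A} (hv : v ∈ N)
    (htv : t * v ∈ N) : t * (f • v) ∈ N := by
  let N' := N.restrictScalars K
  have hxN {w : A} (hw : w ∈ N) : x * w ∈ N := hx w ▸ N.smul_mem _ hw
  have hxN' {w : A} (hw : w ∈ N) : (x⁻¹ : Aˣ) * w ∈ N := T_neg_one_smul hx w ▸ N.smul_mem _ hw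
  refine (smul_mem_of_T_smul_mem (L := N' ⊓ N'.comap (LinearMap.mulLeft K (t : A)))
    (fun w hw => ⟨N.smul_mem _ hw.1, ?_⟩) (fun w hw => ⟨N.smul_mem _ hw.1, ?_⟩) f
    (v := v) ⟨hv, htv⟩).2
  · change t * ((T 1 : K[T;T⁻¹]) • w) ∈ N'
    rw [hx, h.t_mul_x_mul]
    exact N'.sub_mem (hxN' hw.2) (N'.smul_mem _ (hxN' hw.1))
  · change t * ((T (-1) : K[T;T⁻¹]) • w) ∈ N'
    rw [T_neg_one_smul hx, h.t_mul_x_inv_mul]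
    exact N'.add_mem (hxN hw.2) (N'.smul_mem _ (hxN' hw.1))

lemma pi_mul_mem_wordSpan {v : A} (hv : v ∈ wordSpan K π t) : π * v ∈ wordSpan K π t := by
  induction hv using Submodule.span_induction with
  | mem w hw =>
    obtain ⟨i, rfl⟩ := hw
    rw [← Units.val_mul, ← word_pi h.pi_mul_pi]
    exact word_mem_wordSpan K π t i.pi
  | zero => rw [mul_zero]; exact zero_mem _
  | add v w _ _ hv hw => rw [mul_add]; exact add_mem hv hw
  | smul f v _ hv => rw [h.pi_mul_smul hx]; exact Submodule.smul_mem _ _ hv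

omit hx in
lemma t_mul_word_mem_wordSpan (i : DihedralIndex) :
    t * ((word π t i : Aˣ) : A) ∈ wordSpan K π t := by
  have hmem := word_mem_wordSpan K π t i.s
  rcases word_s (π := π) (t := t) i with hi | hi
  · rwa [hi, Units.val_mul] at hmem
  · rw [hi, Units.val_mul, h.t_inv, sub_mul, ← Algebra.smul_def] at hmem
    exact (Submodule.sub_mem_iff_left _
      (Submodule.smul_of_tower_mem _ _ (word_mem_wordSpan K π t i))).1 hmem

lemma t_mul_mem_wordSpan {v : A} (hv : v ∈ wordSpan K π t) : t * v ∈ wordSpan K π t := by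
  induction hv using Submodule.span_induction with
  | mem w hw =>
    obtain ⟨i, rfl⟩ := hw
    exact h.t_mul_word_mem_wordSpan i
  | zero => rw [mul_zero]; exact zero_mem _
  | add v w _ _ hv hw => rw [mul_add]; exact add_mem hv hw
  | smul f v hv htv => exact h.t_mul_smul_mem hx f hv htv

lemma wordSpan_eq_top
    (hgen : Algebra.adjoin K {(x : A), ((x⁻¹ : Aˣ) : A), (π : A), (t : A)} = ⊤) :
    wordSpan K π t = ⊤ := by
  rw [← Submodule.restrictScalars_eq_top_iff K]
  refine eq_top_of_mul_mem hgen ?_ ?_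
  · have hone := word_mem_wordSpan K π t (.rot 0)
    rwa [word_one, Units.val_one] at hone
  · rintro b (rfl | rfl | rfl | rfl) v hv
    · exact hx v ▸ (wordSpan K π t).smul_mem _ hv
    · exact T_neg_one_smul hx v ▸ (wordSpan K π t).smul_mem _ hv
    · exact h.pi_mul_mem_wordSpan hx hv
    · exact h.t_mul_mem_wordSpan hx hv

end Span
end IsDahaTriple
end Relations

lemma IsDemazureLusztig.isDahaTriple {K : Type*} [CommRing K] [IsDomain K] {q τ : Kˣ}
    {Th : Module.End K K[T;T⁻¹]} (h : IsDemazureLusztig τ Th) :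
    IsDahaTriple q τ (Units.map (Algebra.lmul K K[T;T⁻¹]).toMonoidHom unitT)
      (piHatUnit q) (heckeUnit h.hecke) where
  hecke := h.hecke
  mul_x_mul := Units.ext h.mul_T_mul
  pi_mul_pi := Units.ext (LinearMap.ext (piHat_piHat q))
  pi_mul_x := smul_piHat_mul_T q

/-! ### Faithfulness -/

section LeadingTerm

variable {K : Type*} [CommRing K] {q τ : Kˣ}

/-- Post-composition with an algebra endomorphism `σ`, as a `σ`-semilinear map. -/
noncomputable def postcomp (σ : K[T;T⁻¹] →ₐ[K] K[T;T⁻¹]) :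
    Module.End K K[T;T⁻¹] →ₛₗ[(σ : K[T;T⁻¹] →+* K[T;T⁻¹])] Module.End K K[T;T⁻¹] where
  toFun g := σ.toLinearMap ∘ₗ g
  map_add' _ _ := LinearMap.comp_add _ _ _
  map_smul' f g := LinearMap.ext fun v => map_mul σ f (g v)

variable (q) in
/-- `L` has leading term `X ↦ q ^ k X^{±1}`, with respect to the Coxeter length. -/
abbrev HasSubstLeadingTerm (i : DihedralIndex) (L : Module.End K K[T;T⁻¹]) : Prop :=
  HasLeadingTerm K[T;T⁻¹] (fun j => (subst q j).toLinearMap) DihedralIndex.len i L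

lemma HasSubstLeadingTerm.one [Nontrivial K] : HasSubstLeadingTerm q (.rot 0) 1 := by
  have hone : (subst q (.rot 0)).toLinearMap = 1 := congrArg AlgHom.toLinearMap (subst_one q)
  refine ⟨1, 1, one_ne_zero, one_ne_zero, ?_⟩
  beta_reduce
  rw [hone, sub_self]
  exact zero_mem _

variable [IsDomain K] {i : DihedralIndex} {L : Module.End K K[T;T⁻¹]}

lemma HasSubstLeadingTerm.mul (hL : HasSubstLeadingTerm q i L) {σ : K[T;T⁻¹] →ₐ[K] K[T;T⁻¹]}
    (hσ : Function.Injective σ) {γ : DihedralIndex → DihedralIndex}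
    (hγ : ∀ j, σ.comp (subst q j) = subst q (γ j)) (hlen : ∀ j, (γ j).len ≤ j.len + 1)
    {Q : Module.End K K[T;T⁻¹]} {D α β : K[T;T⁻¹]} (hD : D ≠ 0) (hα : α ≠ 0)
    (hQ : ∀ f, D * Q f = α * σ f + β * f) (hi : (γ i).len = i.len + 1) :
    HasSubstLeadingTerm q (γ i) (Q * L) := by
  have hr (j : DihedralIndex) : postcomp σ (subst q j).toLinearMap = (subst q (γ j)).toLinearMap :=
    congrArg AlgHom.toLinearMap (hγ j)
  have hQL : D • (Q * L) = α • postcomp σ L + β • L := LinearMap.ext fun f => hQ (L f)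
  exact HasLeadingTerm.map hσ (postcomp σ) hr hlen hD hα hQL hi hL

lemma HasSubstLeadingTerm.piHat_mul (hL : HasSubstLeadingTerm q i L)
    (hi : i.pi.len = i.len + 1) : HasSubstLeadingTerm q i.pi ((piHat q).toLinearMap * L) :=
  hL.mul (Function.LeftInverse.injective (piHat_piHat q)) (piHat_comp_subst q)
    DihedralIndex.len_pi_le (D := 1) (α := 1) (β := 0) one_ne_zero one_ne_zero
    (fun f => by rw [zero_mul, add_zero]; rfl) hi

lemma HasSubstLeadingTerm.s_mul (hL : HasSubstLeadingTerm q i L) (hi : i.s.len = i.len + 1)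
    {Q : Module.End K K[T;T⁻¹]} {a b : Kˣ} {β : K[T;T⁻¹]}
    (hQ : ∀ f, (T 2 - 1) * Q f = (C (a : K) * T 2 - C (b : K)) * invert f + β * f) :
    HasSubstLeadingTerm q i.s (Q * L) :=
  hL.mul (invert (R := K)).injective (invert_comp_subst q) DihedralIndex.len_s_le
    T_two_sub_one_ne_zero (C_mul_T_two_sub_C_ne_zero a b) hQ hi

lemma hasSubstLeadingTerm_word {x π t : (Module.End K K[T;T⁻¹])ˣ} (h : IsDahaTriple q τ x π t)
    (hπ : (π : Module.End K K[T;T⁻¹]) = (piHat q).toLinearMap)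
    (ht : IsDemazureLusztig τ (t : Module.End K K[T;T⁻¹])) (i : DihedralIndex) :
    HasSubstLeadingTerm q i (word π t i : (Module.End K K[T;T⁻¹])ˣ) := by
  induction i using DihedralIndex.induction_len with
  | one =>
    rw [word_one]
    exact .one
  | pi i hi ih =>
    rw [word_pi h.pi_mul_pi, Units.val_mul, hπ]
    exact ih.piHat_mul hi
  | s i hi ih =>
    rcases word_s (π := π) (t := t) i with hw | hw <;> rw [hw, Units.val_mul]
    · refine ih.s_mul hi (a := τ) (b := τ⁻¹) (β := C ((τ⁻¹ : Kˣ) : K) - C (τ : K)) fun f => ?_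
      linear_combination ht.mul_apply f
    · refine ih.s_mul hi (a := τ) (b := τ⁻¹)
        (β := (C ((τ⁻¹ : Kˣ) : K) - C (τ : K)) * T 2) fun f => ?_
      rw [h.t_inv, LinearMap.sub_apply, Module.algebraMap_end_apply, smul_eq_C_mul, map_sub]
      linear_combination ht.mul_apply f

theorem injective_of_polynomial_representation (hq : Function.Injective fun k : ℤ => q ^ k)
    {A : Type*} [Ring A] [Algebra K A] {x π t : Aˣ} (h : IsDahaTriple q τ x π t)
    (hgen : Algebra.adjoin K {(x : A), ((x⁻¹ : Aˣ) : A), (π : A), (t : A)} = ⊤)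
    (Φ : A →ₐ[K] Module.End K K[T;T⁻¹]) (hx : Φ x = LinearMap.mulLeft K (T 1))
    (hπ : Φ π = (piHat q).toLinearMap) (ht : IsDemazureLusztig τ (Φ t)) :
    Function.Injective Φ := by
  let _ : Module K[T;T⁻¹] A := Module.compHom A (evalUnit (K := K) x).toRingHom
  have hsmul (f : K[T;T⁻¹]) (v : A) : f • v = evalUnit x f * v := rfl
  have hxv (v : A) : (T 1 : K[T;T⁻¹]) • v = x * v := by rw [hsmul, evalUnit_T, zpow_one]
  have : IsScalarTower K K[T;T⁻¹] A :=
    ⟨fun r f v => by rw [hsmul, hsmul, map_smul, smul_mul_assoc]⟩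
  let Φ' : A →ₗ[K[T;T⁻¹]] Module.End K K[T;T⁻¹] :=
    { Φ with
      map_smul' := map_laurent_smul (AlgHom.id K _) Φ.toLinearMap fun v => by
        change Φ ((T 1 : K[T;T⁻¹]) • v) = _
        rw [hxv, map_mul, hx]
        rfl }
  have hword (i : DihedralIndex) : HasSubstLeadingTerm q i (Φ (word π t i : Aˣ)) := by
    have hlead := hasSubstLeadingTerm_word (h.map Φ) hπ ht i
    rwa [← map_word] at hlead
  exact LinearMap.injective_of_linearIndependent (f := Φ') (h.wordSpan_eq_top hxv hgen)
    (linearIndependent_of_hasLeadingTerm (linearIndependent_subst hq) hword)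

end LeadingTerm

/-! ### The double affine Hecke algebra -/

section Daha

variable {Th : Module.End DahaR DahaPolyRep}

/-- The parameter `τ` as a unit of the coefficient ring. -/
noncomputable def tauUnit : DahaRˣ :=
  Units.map (C : ℂ[T;T⁻¹] →+* DahaR).toMonoidHom unitT

/-- The parameter `q` as a unit of the coefficient ring. -/
noncomputable def qUnit : DahaRˣ :=
  unitT

lemma qUnit_zpow_injective : Function.Injective fun k : ℤ => qUnit ^ k := by
  intro k m hkm
  have hT : (T k : DahaR) = T m := by
    rw [← val_unitT_zpow, ← val_unitT_zpow]
    exact congrArg Units.val hkm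
  exact AddMonoidAlgebra.single_left_injective one_ne_zero hT

/-- Stated explicitly because instance search does not unify the coefficient semiring in `DahaRel`
with the one underlying the commutative ring `DahaR`. -/
noncomputable instance : Ring Daha := RingQuot.instRing DahaRel

/-- The generator `X` as a unit. -/
noncomputable def xUnit : Dahaˣ where
  val := Daha.X
  inv := RingQuot.mkAlgHom DahaR DahaRel (FreeAlgebra.ι DahaR 1)
  val_inv := by simpa using! RingQuot.mkAlgHom_rel DahaR DahaRel.X_Xinv
  inv_val := by simpa using! RingQuot.mkAlgHom_rel DahaR DahaRel.Xinv_X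

/-- The generator `Y` as a unit. -/
noncomputable def yUnit : Dahaˣ where
  val := Daha.Y
  inv := RingQuot.mkAlgHom DahaR DahaRel (FreeAlgebra.ι DahaR 3)
  val_inv := by simpa using! RingQuot.mkAlgHom_rel DahaR DahaRel.Y_Yinv
  inv_val := by simpa using! RingQuot.mkAlgHom_rel DahaR DahaRel.Yinv_Y

lemma hecke_T : (Daha.T - algebraMap DahaR Daha tauUnit) *
    (Daha.T + algebraMap DahaR Daha (tauUnit⁻¹ : DahaRˣ)) = 0 := by
  simpa using! RingQuot.mkAlgHom_rel DahaR DahaRel.hecke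

/-- The generator `T` as a unit. -/
noncomputable def tUnit : Dahaˣ :=
  heckeUnit hecke_T

/-- The element `π = Y T⁻¹` as a unit. -/
noncomputable def piUnit : Dahaˣ :=
  yUnit * tUnit⁻¹

lemma piUnit_mul_tUnit : piUnit * tUnit = yUnit :=
  inv_mul_cancel_right _ _

lemma map_piUnit {A : Type*} [Semiring A] [Algebra DahaR A] {Φ : Daha →ₐ[DahaR] A} {p : A}
    (hY : Φ Daha.Y = p * Φ Daha.T) : Φ piUnit = p := by
  change Φ (Daha.Y * (tUnit⁻¹ : Dahaˣ)) = p
  rw [map_mul, hY, mul_assoc, ← map_mul]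
  change p * Φ (tUnit * (tUnit⁻¹ : Dahaˣ)) = p
  rw [tUnit.mul_inv, map_one, mul_one]

lemma isDahaTriple_daha : IsDahaTriple qUnit tauUnit xUnit piUnit tUnit := by
  rw [isDahaTriple_iff, piUnit_mul_tUnit]
  refine ⟨hecke_T, Units.ext ?_, Units.ext ?_, Units.ext ?_⟩
  · simpa only [map_mul] using! RingQuot.mkAlgHom_rel DahaR DahaRel.TXT
  · simpa only [map_mul] using! RingQuot.mkAlgHom_rel DahaR DahaRel.TYinvT
  · simpa only [map_mul, AlgHom.commutes] using! RingQuot.mkAlgHom_rel DahaR DahaRel.cross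

lemma daha_algHom_ext {A : Type*} [Semiring A] [Algebra DahaR A] {Φ Ψ : Daha →ₐ[DahaR] A}
    (hX : Φ Daha.X = Ψ Daha.X) (hT : Φ Daha.T = Ψ Daha.T) (hY : Φ Daha.Y = Ψ Daha.Y) :
    Φ = Ψ := by
  have hinv {u : Dahaˣ} (hu : Φ u = Ψ u) : Φ (u⁻¹ : Dahaˣ) = Ψ (u⁻¹ : Dahaˣ) := by
    have hmap : Units.map Φ.toMonoidHom u = Units.map Ψ.toMonoidHom u := Units.ext hu
    exact congrArg (fun w : Aˣ => ((w⁻¹ : Aˣ) : A)) hmap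
  refine RingQuot.ringQuot_ext' _ _ _ (FreeAlgebra.hom_ext (funext fun i => ?_))
  fin_cases i
  · exact hX
  · exact hinv (u := xUnit) hX
  · exact hY
  · exact hinv (u := yUnit) hY
  · exact hT

lemma adjoin_daha_eq_top :
    Algebra.adjoin DahaR {(xUnit : Daha), ((xUnit⁻¹ : Dahaˣ) : Daha), (piUnit : Daha),
      (tUnit : Daha)} = ⊤ := by
  set S := Algebra.adjoin DahaR {(xUnit : Daha), ((xUnit⁻¹ : Dahaˣ) : Daha), (piUnit : Daha),
      (tUnit : Daha)}
  have hx : (xUnit : Daha) ∈ S := Algebra.subset_adjoin (by simp)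
  have hx' : ((xUnit⁻¹ : Dahaˣ) : Daha) ∈ S := Algebra.subset_adjoin (by simp)
  have hπ : (piUnit : Daha) ∈ S := Algebra.subset_adjoin (by simp)
  have ht : (tUnit : Daha) ∈ S := Algebra.subset_adjoin (by simp)
  have ht' : ((tUnit⁻¹ : Dahaˣ) : Daha) ∈ S :=
    isDahaTriple_daha.t_inv ▸ S.sub_mem ht (S.algebraMap_mem _)
  have hy : (yUnit : Daha) ∈ S := piUnit_mul_tUnit ▸ S.mul_mem hπ ht
  have hy' : ((yUnit⁻¹ : Dahaˣ) : Daha) ∈ S := by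
    rw [← piUnit_mul_tUnit, mul_inv_rev, inv_eq_of_mul_eq_one_right isDahaTriple_daha.pi_mul_pi]
    exact S.mul_mem ht' hπ
  rw [eq_top_iff, ← (AlgHom.range_eq_top _).2 (RingQuot.mkAlgHom_surjective DahaR DahaRel),
    ← Algebra.map_top, ← FreeAlgebra.adjoin_range_ι, AlgHom.map_adjoin, Algebra.adjoin_le_iff]
  rintro _ ⟨_, ⟨i, rfl⟩, rfl⟩
  fin_cases i
  exacts [hx, hx', hy, hy', ht]

lemma exists_daha_algHom {A : Type*} [Ring A] [Algebra DahaR A] {x π t : Aˣ}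
    (h : IsDahaTriple qUnit tauUnit x π t) :
    ∃ Φ : Daha →ₐ[DahaR] A, Φ Daha.X = x ∧ Φ Daha.T = t ∧ Φ Daha.Y = π * t := by
  obtain ⟨hecke, hTXT, hTYT, hcross⟩ := isDahaTriple_iff.1 h
  let F : FreeAlgebra DahaR (Fin 5) →ₐ[DahaR] A :=
    FreeAlgebra.lift DahaR ![(x : A), (x⁻¹ : Aˣ), (π * t : Aˣ), ((π * t)⁻¹ : Aˣ), t]
  have hι (i : Fin 5) : F (FreeAlgebra.ι DahaR i) =
      ![(x : A), (x⁻¹ : Aˣ), (π * t : Aˣ), ((π * t)⁻¹ : Aˣ), t] i :=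
    FreeAlgebra.lift_ι_apply _ _
  have hF : ∀ ⦃a b⦄, DahaRel a b → F a = F b := by
    intro a b hab
    cases hab with
    | X_Xinv => simp only [map_mul, hι, map_one]; exact x.mul_inv
    | Xinv_X => simp only [map_mul, hι, map_one]; exact x.inv_mul
    | Y_Yinv => simp only [map_mul, hι, map_one]; exact (π * t).mul_inv
    | Yinv_Y => simp only [map_mul, hι, map_one]; exact (π * t).inv_mul
    | hecke => simp only [map_mul, map_sub, map_add, map_zero, hι, AlgHom.commutes]; exact hecke
    | TXT => simp only [map_mul, hι]; exact congrArg Units.val hTXT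
    | TYinvT => simp only [map_mul, hι]; exact congrArg Units.val hTYT
    | cross => simp only [map_mul, hι, AlgHom.commutes]; exact congrArg Units.val hcross
  have hΦ (i : Fin 5) :=
    (RingQuot.liftAlgHom_mkAlgHom_apply DahaR F hF (FreeAlgebra.ι DahaR i)).trans (hι i)
  exact ⟨RingQuot.liftAlgHom DahaR ⟨F, hF⟩, hΦ 0, hΦ 4, hΦ 2⟩

lemma existsUnique_polynomial_representation (h : IsDemazureLusztig tauUnit Th) :
    ∃! Φ : Daha →ₐ[DahaR] Module.End DahaR DahaPolyRep,
      Φ Daha.X = LinearMap.mulLeft DahaR (T 1) ∧ Φ Daha.T = Th ∧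
        Φ Daha.Y = (piHat qUnit).toLinearMap * Th := by
  obtain ⟨Φ, hX, hT, hY⟩ := exists_daha_algHom (h.isDahaTriple (q := qUnit))
  exact ⟨Φ, ⟨hX, hT, hY⟩, fun Ψ ⟨hX', hT', hY'⟩ =>
    daha_algHom_ext (hX'.trans hX.symm) (hT'.trans hT.symm) (hY'.trans hY.symm)⟩

lemma polynomial_representation_injective (h : IsDemazureLusztig tauUnit Th)
    {Φ : Daha →ₐ[DahaR] Module.End DahaR DahaPolyRep}
    (hX : Φ Daha.X = LinearMap.mulLeft DahaR (T 1)) (hT : Φ Daha.T = Th)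
    (hY : Φ Daha.Y = (piHat qUnit).toLinearMap * Th) : Function.Injective Φ := by
  subst hT
  exact injective_of_polynomial_representation qUnit_zpow_injective isDahaTriple_daha
    adjoin_daha_eq_top Φ hX (map_piUnit hY) h

end Daha

end DahaPolyRep

/-- The faithful polynomial representation of the type `A₁` double affine Hecke
algebra: given the involution `ŝ : X ↦ X⁻¹`, the endomorphism `p̂ : X ↦ q⁻¹ X` and
the Demazure–Lusztig operator `T̂ f = τ ŝ(f) + (τ - τ⁻¹)(ŝ(f) - f)/(X² - 1)` on
`R[X^{±1}]`, there is a unique algebra homomorphism `Φ : H^{ell} → End_R(R[X^{±1}])`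
with `Φ(X) = (mult. by X)`, `Φ(T) = T̂`, `Φ(Y) = ŝ ∘ p̂ ∘ T̂`, and `Φ` is injective. -/
theorem daha_polynomial_representation
    (sHat pHat : DahaPolyRep →ₐ[DahaR] DahaPolyRep)
    (hs : sHat (LaurentPolynomial.T 1) = LaurentPolynomial.T (-1))
    (hp : pHat (LaurentPolynomial.T 1) =
      LaurentPolynomial.C dahaQInv * LaurentPolynomial.T 1)
    (THat : Module.End DahaR DahaPolyRep)
    (hT : ∀ f : DahaPolyRep,
      (LaurentPolynomial.T 2 - 1) * THat f =
        dahaTau • ((LaurentPolynomial.T 2 - 1) * sHat f) +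
          (dahaTau - dahaTauInv) • (sHat f - f)) :
    (∃! Φ : Daha →ₐ[DahaR] Module.End DahaR DahaPolyRep,
      Φ Daha.X = LinearMap.mulLeft DahaR (LaurentPolynomial.T 1) ∧
      Φ Daha.T = THat ∧
      Φ Daha.Y = sHat.toLinearMap ∘ₗ pHat.toLinearMap ∘ₗ THat) ∧
    ∀ Φ : Daha →ₐ[DahaR] Module.End DahaR DahaPolyRep,
      (Φ Daha.X = LinearMap.mulLeft DahaR (LaurentPolynomial.T 1) ∧
        Φ Daha.T = THat ∧
        Φ Daha.Y = sHat.toLinearMap ∘ₗ pHat.toLinearMap ∘ₗ THat) →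
      Function.Injective Φ := by
  have hsHat : sHat = (LaurentPolynomial.invert : DahaPolyRep ≃ₐ[DahaR] DahaPolyRep).toAlgHom :=
    DahaPolyRep.laurent_algHom_ext (hs.trans (LaurentPolynomial.invert_T 1).symm)
  have hpiHat : sHat.comp pHat = DahaPolyRep.piHat DahaPolyRep.qUnit :=
    DahaPolyRep.comp_eq_piHat hs hp
  have hDL : DahaPolyRep.IsDemazureLusztig DahaPolyRep.tauUnit THat := fun f => by
    rw [hT f, hsHat]
    rfl
  have hY : sHat.toLinearMap ∘ₗ pHat.toLinearMap ∘ₗ THat =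
      (DahaPolyRep.piHat DahaPolyRep.qUnit).toLinearMap * THat :=
    congrArg (fun σ : DahaPolyRep →ₐ[DahaR] DahaPolyRep => σ.toLinearMap ∘ₗ THat) hpiHat
  rw [hY]
  exact ⟨DahaPolyRep.existsUnique_polynomial_representation hDL,
    fun Φ ⟨hΦX, hΦT, hΦY⟩ => DahaPolyRep.polynomial_representation_injective hDL hΦX hΦT hΦY⟩
end
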